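/- Let N ≥ 2, 1 < p ≤ N and p − 1 < q < q_c, and let Ω ⊆ ℝ^N be an open set containing 0. Let u be a strong solution of (E) on Ω ∖ {0} with u < 0 on Ω ∖ {0}. Then there exists k ≤ 0 such that lim_{x→0} u(x)/μ_p(x) = k. -/

import Mathlib

open Metric Set Filter Topology MeasureTheory

/-- The vector field `x ↦ |∇u(x)|^{p-2} ∇u(x)`. -/
noncomputable def pGradField {N : ℕ} (p : ℝ) (u : EuclideanSpace ℝ (Fin N) → ℝ)
    (x : EuclideanSpace ℝ (Fin N)) : EuclideanSpace ℝ (Fin N) :=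
  ‖gradient u x‖ ^ (p - 2) • gradient u x

/-- A strong solution of `(E) : -Δ_p u + |∇u|^q = 0` on an open set `G ⊆ ℝ^N`. -/
def IsStrongSolution {N : ℕ} (p q : ℝ) (G : Set (EuclideanSpace ℝ (Fin N)))
    (u : EuclideanSpace ℝ (Fin N) → ℝ) : Prop :=
  ContDiffOn ℝ 1 u G ∧
  ContDiffOn ℝ 3 u {x | x ∈ G ∧ gradient u x ≠ 0} ∧
  ∀ x ∈ G, DifferentiableAt ℝ (pGradField p u) x ∧
    LinearMap.trace ℝ (EuclideanSpace ℝ (Fin N))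
      (fderiv ℝ (pGradField p u) x : EuclideanSpace ℝ (Fin N) →ₗ[ℝ] EuclideanSpace ℝ (Fin N))
      = ‖gradient u x‖ ^ q

/-- The fundamental solution of the p-Laplacian in `ℝ^N`. -/
noncomputable def mup (N : ℕ) (p : ℝ) (x : EuclideanSpace ℝ (Fin N)) : ℝ :=
  if p < N then ((p - 1) / ((N : ℝ) - p)) * ‖x‖ ^ ((p - (N : ℝ)) / (p - 1))
  else -Real.log ‖x‖

/-!
Write `v = -u > 0`. Bernstein's method for `w = log v` gives the scale-invariant estimate
`|∇v(x)| ≤ C v(x) / |x|`, that is, a Harnack inequality whose constant on the ball of radius `κ|x|`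
around `x` tends to `1` as `κ → 0`. The equation for `w` has the sources `(p-1)|∇w|²` and
`e^{(q-p+1)w}|∇w|^{q-p+2}`; differentiating the exponential produces a term of the wrong sign,
which `|D²w|² ≥ (Δw)²/N` absorbs as long as `(q-p+1)N < 4(p-1)`.

On the other hand `-Δ_p v = |∇v|^q ≥ 0`, so `v` is `p`-superharmonic. Comparison on annuli with
multiples of `μ_p` gives a largest `γ ≥ 0` with `v ≥ γ μ_p` asymptotically, and on every small
sphere `v / μ_p` is at some point hardly larger than `γ`. If `v / μ_p` were at least `a > γ` at
points tending to `0`, Harnack would preserve the excess on a ball of comparable radius, and a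
quantitative strong minimum principle (comparison with the profile `γ |y|^(-β)`,
`β = (N-p)/(p-1)`, plus a small Gaussian bump) would spread it over the whole sphere, a
contradiction. Hence `v / μ_p → γ`.
-/

open Laplacian InnerProductSpace
open scoped Gradient

local notation "𝔼" n:max => EuclideanSpace ℝ (Fin n)

section DirectionalDerivative

variable {E : Type*} [NormedAddCommGroup E] [NormedSpace ℝ E] {f g : E → ℝ} {ψ : ℝ → ℝ} {x : E}

/-- The derivative of `f` in the direction `a`, as a function of the point. The direction comes
first so that higher directional derivatives are iterates: `dirDeriv a (dirDeriv b f)`. -/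
noncomputable def dirDeriv (a : E) (f : E → ℝ) (x : E) : ℝ := fderiv ℝ f x a

theorem dirDeriv_congr (h : f =ᶠ[𝓝 x] g) (a : E) : dirDeriv a f x = dirDeriv a g x := by
  simp only [dirDeriv, h.fderiv_eq]

theorem contDiffAt_dirDeriv {m n : WithTop ℕ∞} (hf : ContDiffAt ℝ n f x) (hmn : m + 1 ≤ n)
    (a : E) : ContDiffAt ℝ m (dirDeriv a f) x :=
  (hf.fderiv_right hmn).clm_apply contDiffAt_const

theorem differentiableAt_dirDeriv (hf : ContDiffAt ℝ 2 f x) (a : E) :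
    DifferentiableAt ℝ (dirDeriv a f) x :=
  (contDiffAt_dirDeriv (m := 1) hf (by norm_num) a).differentiableAt (by norm_num)

theorem dirDeriv_add (hf : DifferentiableAt ℝ f x) (hg : DifferentiableAt ℝ g x) (a : E) :
    dirDeriv a (fun y => f y + g y) x = dirDeriv a f x + dirDeriv a g x := by
  simp only [dirDeriv, fderiv_fun_add hf hg, add_apply]

theorem dirDeriv_const_mul (hf : DifferentiableAt ℝ f x) (c : ℝ) (a : E) :
    dirDeriv a (fun y => c * f y) x = c * dirDeriv a f x := by
  simp only [dirDeriv, fderiv_const_mul hf c, smul_apply, smul_eq_mul]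

theorem dirDeriv_mul (hf : DifferentiableAt ℝ f x) (hg : DifferentiableAt ℝ g x) (a : E) :
    dirDeriv a (fun y => f y * g y) x = f x * dirDeriv a g x + g x * dirDeriv a f x := by
  simp only [dirDeriv, fderiv_fun_mul hf hg, add_apply,
    smul_apply, smul_eq_mul]

theorem dirDeriv_sum {ι : Type*} {s : Finset ι} {F : ι → E → ℝ}
    (hF : ∀ i ∈ s, DifferentiableAt ℝ (F i) x) (a : E) :
    dirDeriv a (fun y => ∑ i ∈ s, F i y) x = ∑ i ∈ s, dirDeriv a (F i) x := by
  simp only [dirDeriv, fderiv_fun_sum hF, sum_apply]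

theorem dirDeriv_comp (hψ : DifferentiableAt ℝ ψ (f x)) (hf : DifferentiableAt ℝ f x) (a : E) :
    dirDeriv a (fun y => ψ (f y)) x = deriv ψ (f x) * dirDeriv a f x := by
  have h : HasFDerivAt (fun y => ψ (f y)) _ x := hψ.hasDerivAt.comp_hasFDerivAt x hf.hasFDerivAt
  simp only [dirDeriv, h.fderiv, smul_apply, smul_eq_mul]

theorem dirDeriv_dirDeriv_comp (hψ : ContDiffAt ℝ 2 ψ (f x)) (hf : ContDiffAt ℝ 2 f x) (a b : E) :
    dirDeriv b (dirDeriv a fun y => ψ (f y)) x =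
      deriv (deriv ψ) (f x) * dirDeriv b f x * dirDeriv a f x +
        deriv ψ (f x) * dirDeriv b (dirDeriv a f) x := by
  have hψ' : DifferentiableAt ℝ (deriv ψ) (f x) :=
    differentiableAt_dirDeriv hψ 1
  have hf' : DifferentiableAt ℝ f x := hf.differentiableAt (by norm_num)
  have hev : dirDeriv a (fun y => ψ (f y)) =ᶠ[𝓝 x] fun y => deriv ψ (f y) * dirDeriv a f y := by
    filter_upwards [hf.continuousAt.eventually (hψ.eventually (by simp)), hf.eventually (by simp)]
      with y hψy hfy
    exact dirDeriv_comp (hψy.differentiableAt (by norm_num)) (hfy.differentiableAt (by norm_num)) a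
  rw [dirDeriv_congr hev, dirDeriv_mul (hψ'.fun_comp' x hf') (differentiableAt_dirDeriv hf a),
    dirDeriv_comp hψ' hf']
  ring

theorem dirDeriv_dirDeriv_add (hf : ContDiffAt ℝ 2 f x) (hg : ContDiffAt ℝ 2 g x) (a b : E) :
    dirDeriv b (dirDeriv a fun y => f y + g y) x =
      dirDeriv b (dirDeriv a f) x + dirDeriv b (dirDeriv a g) x := by
  have hev : dirDeriv a (fun y => f y + g y) =ᶠ[𝓝 x] fun y => dirDeriv a f y + dirDeriv a g y := by
    filter_upwards [hf.eventually (by simp), hg.eventually (by simp)] with y hfy hgy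
    exact dirDeriv_add (hfy.differentiableAt (by norm_num)) (hgy.differentiableAt (by norm_num)) a
  rw [dirDeriv_congr hev, dirDeriv_add (differentiableAt_dirDeriv hf a)
    (differentiableAt_dirDeriv hg a)]

theorem dirDeriv_dirDeriv_const_mul (hf : ContDiffAt ℝ 2 f x) (c : ℝ) (a b : E) :
    dirDeriv b (dirDeriv a fun y => c * f y) x = c * dirDeriv b (dirDeriv a f) x := by
  have hev : dirDeriv a (fun y => c * f y) =ᶠ[𝓝 x] fun y => c * dirDeriv a f y := by
    filter_upwards [hf.eventually (by simp)] with y hfy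
    exact dirDeriv_const_mul (hfy.differentiableAt (by norm_num)) c a
  rw [dirDeriv_congr hev, dirDeriv_const_mul (differentiableAt_dirDeriv hf a)]

theorem dirDeriv_dirDeriv_eq_fderiv_fderiv (hf : ContDiffAt ℝ 2 f x) (a b : E) :
    dirDeriv a (dirDeriv b f) x = fderiv ℝ (fderiv ℝ f) x a b := by
  have hd : DifferentiableAt ℝ (fderiv ℝ f) x :=
    (hf.fderiv_right (m := 1) (by norm_num)).differentiableAt (by norm_num)
  have h : HasFDerivAt (dirDeriv b f) _ x := hd.hasFDerivAt.clm_apply (hasFDerivAt_const b x)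
  rw [dirDeriv, h.fderiv]
  simp

theorem dirDeriv_comm (hf : ContDiffAt ℝ 2 f x) (a b : E) :
    dirDeriv a (dirDeriv b f) x = dirDeriv b (dirDeriv a f) x := by
  rw [dirDeriv_dirDeriv_eq_fderiv_fderiv hf, dirDeriv_dirDeriv_eq_fderiv_fderiv hf]
  exact hf.isSymmSndFDerivAt (by simp) a b

theorem hasDerivAt_comp_line {a : E} {t : ℝ} (hf : DifferentiableAt ℝ f (x + t • a)) :
    HasDerivAt (fun t : ℝ => f (x + t • a)) (dirDeriv a f (x + t • a)) t := by
  have h1 : HasDerivAt (fun t : ℝ => x + t • a) a t := by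
    simpa using ((hasDerivAt_id t).smul_const a).const_add x
  exact hf.hasFDerivAt.comp_hasDerivAt t h1

theorem dirDeriv_inner {F : Type*} [NormedAddCommGroup F] [InnerProductSpace ℝ F] {X Y : E → F}
    (hX : DifferentiableAt ℝ X x) (hY : DifferentiableAt ℝ Y x) (a : E) :
    dirDeriv a (fun y => inner ℝ (X y) (Y y)) x =
      inner ℝ (X x) (fderiv ℝ Y x a) + inner ℝ (fderiv ℝ X x a) (Y x) :=
  fderiv_inner_apply ℝ hX hY a

end DirectionalDerivative

section SecondDerivativeTest

theorem deriv_deriv_nonneg_of_isLocalMin {f : ℝ → ℝ} {x : ℝ} (hf : ContinuousAt f x)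
    (hmin : IsLocalMin f x) : 0 ≤ deriv (deriv f) x := by
  by_contra! hneg
  have hmax : IsLocalMax f x := isLocalMax_of_deriv_deriv_neg hneg hmin.deriv_eq_zero hf
  have hconst : f =ᶠ[𝓝 x] fun _ => f x := by
    filter_upwards [hmin, hmax] with t h1 h2 using le_antisymm h2 h1
  have hzero : deriv (deriv f) x = 0 := by
    rw [hconst.deriv.deriv_eq]
    simp
  exact hneg.ne hzero

variable {E : Type*} [NormedAddCommGroup E] [NormedSpace ℝ E] {f φ : E → ℝ} {x : E}

theorem dirDeriv_dirDeriv_nonneg_of_isLocalMin (hf : ContDiffAt ℝ 2 f x) (hmin : IsLocalMin f x)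
    (a : E) : 0 ≤ dirDeriv a (dirDeriv a f) x := by
  have hline : Tendsto (fun t : ℝ => x + t • a) (𝓝 0) (𝓝 x) := by
    have : ContinuousAt (fun t : ℝ => x + t • a) 0 := by fun_prop
    simpa using this.tendsto
  have hderiv : deriv (fun t : ℝ => f (x + t • a)) =ᶠ[𝓝 0] fun t => dirDeriv a f (x + t • a) := by
    filter_upwards [hline.eventually (hf.eventually (by simp))] with t ht
    exact (hasDerivAt_comp_line (ht.differentiableAt (by norm_num))).deriv
  have hsecond : deriv (fun t : ℝ => dirDeriv a f (x + t • a)) 0 = dirDeriv a (dirDeriv a f) x := by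
    simpa using (hasDerivAt_comp_line (f := dirDeriv a f) (x := x) (a := a) (t := 0)
      (by simpa using differentiableAt_dirDeriv hf a)).deriv
  rw [← hsecond, ← hderiv.deriv_eq]
  refine deriv_deriv_nonneg_of_isLocalMin ?_ ?_
  · exact ContinuousAt.comp' (by simpa using hf.continuousAt) (by fun_prop)
  · simpa [IsLocalMin, IsMinFilter] using hline.eventually hmin

theorem dirDeriv_eq_of_isLocalMin_sub (hf : DifferentiableAt ℝ f x) (hφ : DifferentiableAt ℝ φ x)
    (hmin : IsLocalMin (fun y => f y - φ y) x) (a : E) : dirDeriv a f x = dirDeriv a φ x := by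
  have h := hmin.fderiv_eq_zero
  rw [fderiv_fun_sub hf hφ, sub_eq_zero] at h
  simp only [dirDeriv, h]

theorem dirDeriv_dirDeriv_le_of_isLocalMin_sub (hf : ContDiffAt ℝ 2 f x) (hφ : ContDiffAt ℝ 2 φ x)
    (hmin : IsLocalMin (fun y => f y - φ y) x) (a : E) :
    dirDeriv a (dirDeriv a φ) x ≤ dirDeriv a (dirDeriv a f) x := by
  have hneg : ContDiffAt ℝ 2 (fun y => -1 * φ y) x := contDiffAt_const.mul hφ
  have h := dirDeriv_dirDeriv_nonneg_of_isLocalMin (hf.add hneg)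
    (by simpa [← sub_eq_add_neg] using hmin) a
  rw [dirDeriv_dirDeriv_add hf hneg, dirDeriv_dirDeriv_const_mul hφ] at h
  linarith

end SecondDerivativeTest

section RadialFunction

variable {E : Type*} [NormedAddCommGroup E] [InnerProductSpace ℝ E] {ψ : ℝ → ℝ} {x c : E}

theorem contDiffAt_norm_sub_sq {n : WithTop ℕ∞} (c x : E) :
    ContDiffAt ℝ n (fun y : E => ‖y - c‖ ^ 2) x :=
  ((contDiff_id.sub contDiff_const).norm_sq ℝ).contDiffAt

theorem dirDeriv_norm_sub_sq (c a x : E) :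
    dirDeriv a (fun y => ‖y - c‖ ^ 2) x = 2 * inner ℝ (x - c) a := by
  have h : HasFDerivAt (fun y => ‖y - c‖ ^ 2) _ x := ((hasFDerivAt_id x).sub_const c).norm_sq
  simp [dirDeriv, h.fderiv, inner_sub_left]

theorem dirDeriv_dirDeriv_norm_sub_sq (c a b x : E) :
    dirDeriv b (dirDeriv a fun y => ‖y - c‖ ^ 2) x = 2 * inner ℝ b a := by
  have h : HasFDerivAt (fun y => inner ℝ (y - c) a) _ x :=
    ((hasFDerivAt_id x).sub_const c).inner ℝ (hasFDerivAt_const a x)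
  rw [show (dirDeriv a fun y : E => ‖y - c‖ ^ 2) = fun y => 2 * inner ℝ (y - c) a from
    funext fun y => dirDeriv_norm_sub_sq c a y, dirDeriv_const_mul h.differentiableAt, dirDeriv,
    h.fderiv]
  simp

theorem contDiffAt_radial {n : WithTop ℕ∞} (hψ : ContDiffAt ℝ n ψ (‖x - c‖ ^ 2)) :
    ContDiffAt ℝ n (fun y => ψ (‖y - c‖ ^ 2)) x :=
  ContDiffAt.comp x hψ (contDiffAt_norm_sub_sq c x)

theorem dirDeriv_radial (hψ : DifferentiableAt ℝ ψ (‖x - c‖ ^ 2)) (a : E) :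
    dirDeriv a (fun y => ψ (‖y - c‖ ^ 2)) x = 2 * deriv ψ (‖x - c‖ ^ 2) * inner ℝ (x - c) a := by
  rw [dirDeriv_comp (f := fun y => ‖y - c‖ ^ 2) hψ
    ((contDiffAt_norm_sub_sq c x).differentiableAt one_ne_zero),
    dirDeriv_norm_sub_sq]
  ring

end RadialFunction

section NondivergenceForm

variable {E : Type*} [NormedAddCommGroup E] [InnerProductSpace ℝ E] [FiniteDimensional ℝ E]
  {φ ψ : E → ℝ} {x : E}

theorem laplacian_eq_sum_dirDeriv {ι : Type*} [Fintype ι] (b : OrthonormalBasis ι ℝ E)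
    (hφ : ContDiffAt ℝ 2 φ x) : Δ φ x = ∑ i, dirDeriv (b i) (dirDeriv (b i) φ) x := by
  simp only [laplacian_eq_iteratedFDeriv_orthonormalBasis φ b, iteratedFDeriv_two_apply,
    Matrix.cons_val_zero, Matrix.cons_val_one, dirDeriv_dirDeriv_eq_fderiv_fderiv hφ]

/-- The nondivergence form of the `p`-Laplacian of `φ` with its coefficients frozen at the
direction `g`. For `g = ∇φ(x) ≠ 0` it equals `|∇φ(x)|^{4-p} Δ_p φ(x)`. -/
noncomputable def nondivPLaplacian (p : ℝ) (g : E) (φ : E → ℝ) (x : E) : ℝ :=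
  ‖g‖ ^ 2 * Δ φ x + (p - 2) * dirDeriv g (dirDeriv g φ) x

theorem nondivPLaplacian_add (hφ : ContDiffAt ℝ 2 φ x) (hψ : ContDiffAt ℝ 2 ψ x) (p : ℝ) (g : E) :
    nondivPLaplacian p g (fun y => φ y + ψ y) x =
      nondivPLaplacian p g φ x + nondivPLaplacian p g ψ x := by
  have h : Δ (fun y => φ y + ψ y) x = Δ φ x + Δ ψ x := hφ.laplacian_add hψ
  rw [nondivPLaplacian, h, dirDeriv_dirDeriv_add hφ hψ, nondivPLaplacian, nondivPLaplacian]
  ring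

theorem nondivPLaplacian_const_mul (hφ : ContDiffAt ℝ 2 φ x) (c p : ℝ) (g : E) :
    nondivPLaplacian p g (fun y => c * φ y) x = c * nondivPLaplacian p g φ x := by
  have h : Δ (fun y => c * φ y) x = c * Δ φ x := laplacian_smul c hφ
  rw [nondivPLaplacian, h, dirDeriv_dirDeriv_const_mul hφ, nondivPLaplacian]
  ring

theorem nondivPLaplacian_smul (hφ : ContDiffAt ℝ 2 φ x) (c p : ℝ) (g : E) :
    nondivPLaplacian p (c • g) φ x = c ^ 2 * nondivPLaplacian p g φ x := by
  rw [nondivPLaplacian, nondivPLaplacian, dirDeriv_dirDeriv_eq_fderiv_fderiv hφ,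
    dirDeriv_dirDeriv_eq_fderiv_fderiv hφ, norm_smul, mul_pow, Real.norm_eq_abs, sq_abs]
  simp only [map_smul, smul_apply, smul_eq_mul]
  ring

theorem exists_orthonormalBasis_eq_norm_smul {g : E} (hg : g ≠ 0) :
    ∃ (b : OrthonormalBasis (Fin (Module.finrank ℝ E)) ℝ E) (i : Fin (Module.finrank ℝ E)),
      g = ‖g‖ • b i := by
  have hg' : ‖g‖ ≠ 0 := norm_ne_zero_iff.2 hg
  have : Nontrivial E := nontrivial_of_ne g 0 hg
  let i : Fin (Module.finrank ℝ E) := ⟨0, Module.finrank_pos⟩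
  obtain ⟨b, hb⟩ := Orthonormal.exists_orthonormalBasis_extension_of_card_eq (𝕜 := ℝ)
    (Fintype.card_fin _).symm (v := fun _ => ‖g‖⁻¹ • g) (s := {i})
    ⟨fun _ => by simp [norm_smul, hg'], fun j k hjk => absurd (Subsingleton.elim j k) hjk⟩
  exact ⟨b, i, by rw [hb i rfl, smul_smul, mul_inv_cancel₀ hg', one_smul]⟩

theorem nondivPLaplacian_nonneg {p : ℝ} (hp : 1 ≤ p) (g : E) (hφ : ContDiffAt ℝ 2 φ x)
    (hess : ∀ a, 0 ≤ dirDeriv a (dirDeriv a φ) x) : 0 ≤ nondivPLaplacian p g φ x := by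
  rcases eq_or_ne g 0 with rfl | hg
  · simp [nondivPLaplacian, dirDeriv]
  obtain ⟨b, i, hb⟩ := exists_orthonormalBasis_eq_norm_smul hg
  have hle : dirDeriv (b i) (dirDeriv (b i) φ) x ≤ Δ φ x := by
    rw [laplacian_eq_sum_dirDeriv b hφ]
    exact Finset.single_le_sum (fun j _ => hess (b j)) (Finset.mem_univ i)
  rw [hb, nondivPLaplacian_smul hφ, nondivPLaplacian, b.norm_eq_one]
  have := hess (b i)
  exact mul_nonneg (sq_nonneg _) (by nlinarith)

theorem nondivPLaplacian_mono {p : ℝ} (hp : 1 ≤ p) (g : E) (hφ : ContDiffAt ℝ 2 φ x)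
    (hψ : ContDiffAt ℝ 2 ψ x)
    (hess : ∀ a, dirDeriv a (dirDeriv a φ) x ≤ dirDeriv a (dirDeriv a ψ) x) :
    nondivPLaplacian p g φ x ≤ nondivPLaplacian p g ψ x := by
  have hneg : ContDiffAt ℝ 2 (fun y => -1 * φ y) x := contDiffAt_const.mul hφ
  have h := nondivPLaplacian_nonneg hp g (ContDiffAt.add hψ hneg) fun a => by
    rw [dirDeriv_dirDeriv_add hψ hneg, dirDeriv_dirDeriv_const_mul hφ]
    linarith [hess a]
  rw [nondivPLaplacian_add hψ hneg, nondivPLaplacian_const_mul hφ] at h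
  linarith

end NondivergenceForm

section Gradient

variable {E : Type*} [NormedAddCommGroup E] [InnerProductSpace ℝ E] [CompleteSpace E]
  {f : E → ℝ} {x : E}

theorem inner_gradient_eq_dirDeriv (f : E → ℝ) (x a : E) : ⟪∇ f x, a⟫_ℝ = dirDeriv a f x :=
  inner_gradient_left ..

theorem gradient_eq_of_forall_dirDeriv {g : E} (h : ∀ a, dirDeriv a f x = ⟪g, a⟫_ℝ) :
    ∇ f x = g :=
  ext_inner_right ℝ fun a => by rw [inner_gradient_eq_dirDeriv, h]

theorem norm_gradient_eq_norm_fderiv (f : E → ℝ) (x : E) : ‖∇ f x‖ = ‖fderiv ℝ f x‖ := by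
  simp [gradient]

theorem contDiffAt_gradient {m n : WithTop ℕ∞} (hf : ContDiffAt ℝ n f x) (hmn : m + 1 ≤ n) :
    ContDiffAt ℝ m (∇ f) x :=
  (toDual ℝ E).symm.contDiff.contDiffAt.comp x (hf.fderiv_right hmn)

theorem differentiableAt_gradient (hf : ContDiffAt ℝ 2 f x) : DifferentiableAt ℝ (∇ f) x :=
  (contDiffAt_gradient (m := 1) hf (by norm_num)).differentiableAt one_ne_zero

theorem inner_fderiv_gradient (hf : ContDiffAt ℝ 2 f x) (a b : E) :
    ⟪fderiv ℝ (∇ f) x a, b⟫_ℝ = dirDeriv a (dirDeriv b f) x := by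
  have h : HasFDerivAt (fun y => ⟪∇ f y, b⟫_ℝ) _ x :=
    (differentiableAt_gradient hf).hasFDerivAt.inner ℝ (hasFDerivAt_const b x)
  rw [← funext fun y => inner_gradient_eq_dirDeriv f y b, dirDeriv, h.fderiv]
  simp

end Gradient

section Composition

variable {N : ℕ} {f : 𝔼 N → ℝ} {ψ : ℝ → ℝ} {x c : 𝔼 N}

theorem gradient_comp (hψ : DifferentiableAt ℝ ψ (f x)) (hf : DifferentiableAt ℝ f x) :
    ∇ (fun y => ψ (f y)) x = deriv ψ (f x) • ∇ f x :=
  gradient_eq_of_forall_dirDeriv fun a => by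
    rw [dirDeriv_comp hψ hf, real_inner_smul_left, inner_gradient_eq_dirDeriv]

theorem nondivPLaplacian_comp (hψ : ContDiffAt ℝ 2 ψ (f x)) (hf : ContDiffAt ℝ 2 f x) (p : ℝ)
    (g : 𝔼 N) : nondivPLaplacian p g (fun y => ψ (f y)) x =
      deriv (deriv ψ) (f x) * (‖g‖ ^ 2 * ‖∇ f x‖ ^ 2 + (p - 2) * ⟪∇ f x, g⟫_ℝ ^ 2) +
        deriv ψ (f x) * nondivPLaplacian p g f x := by
  let b := EuclideanSpace.basisFun (Fin N) ℝ
  have hΔ : Δ (fun y => ψ (f y)) x =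
      deriv (deriv ψ) (f x) * ‖∇ f x‖ ^ 2 + deriv ψ (f x) * Δ f x := by
    have hc : ContDiffAt ℝ 2 (fun y => ψ (f y)) x := ContDiffAt.comp x hψ hf
    rw [laplacian_eq_sum_dirDeriv b hc, laplacian_eq_sum_dirDeriv b hf,
      ← b.sum_sq_inner_left, Finset.mul_sum, Finset.mul_sum, ← Finset.sum_add_distrib]
    refine Finset.sum_congr rfl fun i _ => ?_
    rw [dirDeriv_dirDeriv_comp hψ hf, inner_gradient_eq_dirDeriv]
    ring
  rw [nondivPLaplacian, hΔ, dirDeriv_dirDeriv_comp hψ hf, inner_gradient_eq_dirDeriv,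
    nondivPLaplacian]
  ring

theorem nondivPLaplacian_norm_sub_sq (p : ℝ) (c g : 𝔼 N) (x : 𝔼 N) :
    nondivPLaplacian p g (fun y => ‖y - c‖ ^ 2) x = 2 * (N + p - 2) * ‖g‖ ^ 2 := by
  let b := EuclideanSpace.basisFun (Fin N) ℝ
  rw [nondivPLaplacian, laplacian_eq_sum_dirDeriv b (contDiffAt_norm_sub_sq c x)]
  simp only [dirDeriv_dirDeriv_norm_sub_sq, real_inner_self_eq_norm_sq, b.norm_eq_one,
    Finset.sum_const, Finset.card_univ, Fintype.card_fin, nsmul_eq_mul]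
  ring

theorem gradient_radial (hψ : DifferentiableAt ℝ ψ (‖x - c‖ ^ 2)) :
    ∇ (fun y => ψ (‖y - c‖ ^ 2)) x = (2 * deriv ψ (‖x - c‖ ^ 2)) • (x - c) :=
  gradient_eq_of_forall_dirDeriv fun a => by rw [dirDeriv_radial hψ, real_inner_smul_left]

theorem nondivPLaplacian_radial (hψ : ContDiffAt ℝ 2 ψ (‖x - c‖ ^ 2)) (p : ℝ) (g : 𝔼 N) :
    nondivPLaplacian p g (fun y => ψ (‖y - c‖ ^ 2)) x =
      4 * deriv (deriv ψ) (‖x - c‖ ^ 2) *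
          (‖g‖ ^ 2 * ‖x - c‖ ^ 2 + (p - 2) * ⟪x - c, g⟫_ℝ ^ 2) +
        2 * deriv ψ (‖x - c‖ ^ 2) * (N + p - 2) * ‖g‖ ^ 2 := by
  have hgrad : ∇ (fun y => ‖y - c‖ ^ 2) x = (2 : ℝ) • (x - c) :=
    gradient_eq_of_forall_dirDeriv fun a => by rw [dirDeriv_norm_sub_sq, real_inner_smul_left]
  rw [nondivPLaplacian_comp (f := fun y => ‖y - c‖ ^ 2) hψ (contDiffAt_norm_sub_sq c x), hgrad,
    nondivPLaplacian_norm_sub_sq, norm_smul, real_inner_smul_left]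
  norm_num
  ring

end Composition

section StrongSolution

variable {N : ℕ} {p q : ℝ} {G : Set (𝔼 N)} {u : 𝔼 N → ℝ} {x : 𝔼 N}

theorem fderiv_pGradField_apply (p : ℝ) (hu : ContDiffAt ℝ 2 u x) (hx : ∇ u x ≠ 0) (v : 𝔼 N) :
    fderiv ℝ (pGradField p u) x v = ‖∇ u x‖ ^ (p - 2) • fderiv ℝ (∇ u) x v +
      ((p - 2) * ‖∇ u x‖ ^ (p - 4) * ⟪∇ u x, fderiv ℝ (∇ u) x v⟫_ℝ) • ∇ u x := by
  have hrpow (t : ℝ) (y : 𝔼 N) : (‖∇ u y‖ ^ 2) ^ t = ‖∇ u y‖ ^ (2 * t) := by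
    rw [Real.rpow_mul (norm_nonneg _), Real.rpow_two]
  have hA := (differentiableAt_gradient hu).hasFDerivAt
  have hF : HasFDerivAt (pGradField p u) _ x :=
    ((hA.norm_sq.rpow_const (p := (p - 2) / 2)
      (Or.inl (pow_ne_zero 2 (norm_ne_zero_iff.2 hx)))).smul hA).congr_of_eventuallyEq
      (.of_forall fun y => by simp only [pGradField, Pi.smul_apply', hrpow]; ring_nf)
  rw [hF.fderiv]
  simp only [hrpow, add_apply, smul_apply, ContinuousLinearMap.smulRight_apply,
    ContinuousLinearMap.comp_apply, innerSL_apply_apply, nsmul_eq_mul, smul_eq_mul]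
  ring_nf

theorem trace_fderiv_pGradField (p : ℝ) (hu : ContDiffAt ℝ 2 u x) (hx : ∇ u x ≠ 0) :
    LinearMap.trace ℝ (𝔼 N) (fderiv ℝ (pGradField p u) x : 𝔼 N →ₗ[ℝ] 𝔼 N) =
      ‖∇ u x‖ ^ (p - 4) * nondivPLaplacian p (∇ u x) u x := by
  let b := EuclideanSpace.basisFun (Fin N) ℝ
  set A := fderiv ℝ (∇ u) x
  have hΔ : ∑ i, ⟪b i, A (b i)⟫_ℝ = Δ u x := by
    simp only [laplacian_eq_sum_dirDeriv b hu, ← inner_fderiv_gradient hu, real_inner_comm, A]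
  have hgg : ∑ i, ⟪∇ u x, A (b i)⟫_ℝ * ⟪b i, ∇ u x⟫_ℝ =
      dirDeriv (∇ u x) (dirDeriv (∇ u x) u) x := by
    simp only [← ContinuousLinearMap.adjoint_inner_left, b.sum_inner_mul_inner]
    rw [ContinuousLinearMap.adjoint_inner_left, real_inner_comm, inner_fderiv_gradient hu]
  have hpow : ‖∇ u x‖ ^ (p - 2) = ‖∇ u x‖ ^ (p - 4) * ‖∇ u x‖ ^ 2 := by
    rw [← Real.rpow_two, ← Real.rpow_add (norm_pos_iff.2 hx)]
    ring_nf
  rw [LinearMap.trace_eq_sum_inner _ b]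
  simp only [ContinuousLinearMap.coe_coe, fderiv_pGradField_apply p hu hx, inner_add_right,
    inner_smul_right, Finset.sum_add_distrib, mul_assoc, ← Finset.mul_sum]
  rw [hΔ, hgg, hpow, nondivPLaplacian]
  ring

theorem IsStrongSolution.isOpen_regular (hG : IsOpen G) (hu : IsStrongSolution p q G u) :
    IsOpen {x | x ∈ G ∧ ∇ u x ≠ 0} := by
  have h : ContinuousOn (fun x => ‖fderiv ℝ u x‖) G :=
    (hu.1.continuousOn_fderiv_of_isOpen hG le_rfl).norm
  convert h.isOpen_inter_preimage hG (isOpen_compl_singleton (x := (0 : ℝ))) using 1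
  ext x
  simp [← norm_gradient_eq_norm_fderiv]

theorem IsStrongSolution.contDiffAt (hG : IsOpen G) (hu : IsStrongSolution p q G u) (hx : x ∈ G) :
    ContDiffAt ℝ 1 u x :=
  hu.1.contDiffAt (hG.mem_nhds hx)

theorem IsStrongSolution.contDiffAt_three (hG : IsOpen G) (hu : IsStrongSolution p q G u)
    (hx : x ∈ G) (hgx : ∇ u x ≠ 0) : ContDiffAt ℝ 3 u x :=
  hu.2.1.contDiffAt ((hu.isOpen_regular hG).mem_nhds ⟨hx, hgx⟩)

theorem IsStrongSolution.nondivPLaplacian_eq (hG : IsOpen G) (hu : IsStrongSolution p q G u)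
    (hx : x ∈ G) (hgx : ∇ u x ≠ 0) :
    nondivPLaplacian p (∇ u x) u x = ‖∇ u x‖ ^ (q - p + 4) := by
  have hpos : 0 < ‖∇ u x‖ := norm_pos_iff.2 hgx
  have h := trace_fderiv_pGradField p ((hu.contDiffAt_three hG hx hgx).of_le (by norm_num)) hgx
  rw [(hu.2.2 x hx).2] at h
  rw [show q - p + 4 = q - (p - 4) by ring, Real.rpow_sub hpos, h,
    mul_div_cancel_left₀ _ (Real.rpow_pos_of_pos hpos _).ne']

end StrongSolution

section Bochner

variable {N : ℕ} {w : 𝔼 N → ℝ} {x : 𝔼 N}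

theorem contDiffAt_norm_gradient_sq (hw : ContDiffAt ℝ 3 w x) :
    ContDiffAt ℝ 2 (fun y => ‖∇ w y‖ ^ 2) x :=
  (contDiffAt_gradient hw (by norm_num)).norm_sq ℝ

theorem gradient_norm_gradient_sq (hw : ContDiffAt ℝ 2 w x) :
    ∇ (fun y => ‖∇ w y‖ ^ 2) x = (2 : ℝ) • fderiv ℝ (∇ w) x (∇ w x) :=
  gradient_eq_of_forall_dirDeriv fun a => by
    have hd := differentiableAt_gradient hw
    simp only [← real_inner_self_eq_norm_sq]
    rw [dirDeriv_inner hd hd, real_inner_comm, real_inner_smul_left, inner_fderiv_gradient hw,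
      inner_fderiv_gradient hw, dirDeriv_comm hw]
    ring

theorem nondivPLaplacian_gradient_eq (p : ℝ) (hw : ContDiffAt ℝ 2 w x) :
    nondivPLaplacian p (∇ w x) w x = ‖∇ w x‖ ^ 2 * Δ w x +
      (p - 2) / 2 * ⟪∇ (fun y => ‖∇ w y‖ ^ 2) x, ∇ w x⟫_ℝ := by
  rw [gradient_norm_gradient_sq hw, real_inner_smul_left, inner_fderiv_gradient hw,
    nondivPLaplacian]
  ring

theorem differentiableAt_laplacian (hw : ContDiffAt ℝ 3 w x) : DifferentiableAt ℝ (Δ w) x := by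
  have hev : Δ w =ᶠ[𝓝 x] fun y => ∑ i, dirDeriv (EuclideanSpace.basisFun (Fin N) ℝ i)
      (dirDeriv (EuclideanSpace.basisFun (Fin N) ℝ i) w) y :=
    (hw.eventually (by simp)).mono fun y hy => laplacian_eq_sum_dirDeriv _ (hy.of_le (by norm_num))
  refine hev.differentiableAt_iff.2 (DifferentiableAt.fun_sum fun i _ => ?_)
  exact differentiableAt_dirDeriv (contDiffAt_dirDeriv hw (by norm_num) _) _

theorem dirDeriv_laplacian (b : OrthonormalBasis (Fin N) ℝ (𝔼 N)) (hw : ContDiffAt ℝ 3 w x)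
    (a : 𝔼 N) :
    dirDeriv a (Δ w) x = ∑ i, dirDeriv (b i) (dirDeriv (b i) (dirDeriv a w)) x := by
  have hw' : ∀ᶠ y in 𝓝 x, ContDiffAt ℝ 2 w y :=
    (hw.eventually (by simp)).mono fun y hy => hy.of_le (by norm_num)
  have hD (c : 𝔼 N) : ContDiffAt ℝ 2 (dirDeriv c w) x := contDiffAt_dirDeriv hw (by norm_num) c
  rw [dirDeriv_congr (hw'.mono fun y hy => laplacian_eq_sum_dirDeriv b hy),
    dirDeriv_sum fun i _ => differentiableAt_dirDeriv (hD (b i)) (b i)]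
  refine Finset.sum_congr rfl fun i _ => ?_
  rw [dirDeriv_comm (hD (b i)), dirDeriv_congr (hw'.mono fun y hy => dirDeriv_comm hy a (b i))]

theorem laplacian_norm_gradient_sq (b : OrthonormalBasis (Fin N) ℝ (𝔼 N))
    (hw : ContDiffAt ℝ 3 w x) :
    Δ (fun y => ‖∇ w y‖ ^ 2) x =
      2 * ∑ i, ‖fderiv ℝ (∇ w) x (b i)‖ ^ 2 + 2 * dirDeriv (∇ w x) (Δ w) x := by
  have hw' : ∀ᶠ y in 𝓝 x, ContDiffAt ℝ 2 w y :=
    (hw.eventually (by simp)).mono fun y hy => hy.of_le (by norm_num)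
  have hgrad : ContDiffAt ℝ 2 (∇ w) x := contDiffAt_gradient hw (by norm_num)
  have hcol (i : Fin N) : DifferentiableAt ℝ (fun y => fderiv ℝ (∇ w) y (b i)) x :=
    ((hgrad.fderiv_right (m := 1) (by norm_num)).clm_apply contDiffAt_const).differentiableAt
      one_ne_zero
  have hthird (i : Fin N) (a : 𝔼 N) : ⟪fderiv ℝ (fun y => fderiv ℝ (∇ w) y (b i)) x (b i), a⟫_ℝ =
      dirDeriv (b i) (dirDeriv (b i) (dirDeriv a w)) x := by
    rw [← dirDeriv_congr (hw'.mono fun y hy => inner_fderiv_gradient hy (b i) a),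
      dirDeriv_inner (hcol i) (differentiableAt_const a)]
    simp
  have hsecond (i : Fin N) : dirDeriv (b i) (dirDeriv (b i) fun y => ‖∇ w y‖ ^ 2) x =
      2 * ‖fderiv ℝ (∇ w) x (b i)‖ ^ 2 +
        2 * dirDeriv (b i) (dirDeriv (b i) (dirDeriv (∇ w x) w)) x := by
    have hev : dirDeriv (b i) (fun y => ‖∇ w y‖ ^ 2) =ᶠ[𝓝 x]
        fun y => 2 * ⟪fderiv ℝ (∇ w) y (b i), ∇ w y⟫_ℝ := hw'.mono fun y hy => by
      rw [← inner_gradient_eq_dirDeriv, gradient_norm_gradient_sq hy, real_inner_smul_left,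
        inner_fderiv_gradient hy, ← dirDeriv_comm hy, ← inner_fderiv_gradient hy]
    have hd := hgrad.differentiableAt two_ne_zero
    rw [dirDeriv_congr hev, dirDeriv_const_mul ((hcol i).inner ℝ hd), dirDeriv_inner (hcol i) hd,
      hthird, real_inner_self_eq_norm_sq]
    ring
  rw [laplacian_eq_sum_dirDeriv b (contDiffAt_norm_gradient_sq hw), dirDeriv_laplacian b hw]
  simp only [hsecond, Finset.sum_add_distrib, ← Finset.mul_sum]

theorem sq_laplacian_le (b : OrthonormalBasis (Fin N) ℝ (𝔼 N)) (hw : ContDiffAt ℝ 2 w x) :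
    Δ w x ^ 2 ≤ N * ∑ i, ‖fderiv ℝ (∇ w) x (b i)‖ ^ 2 := by
  rw [laplacian_eq_sum_dirDeriv b hw]
  calc (∑ i, dirDeriv (b i) (dirDeriv (b i) w) x) ^ 2
      ≤ N * ∑ i, dirDeriv (b i) (dirDeriv (b i) w) x ^ 2 := by
        simpa using sq_sum_le_card_mul_sum_sq (s := Finset.univ)
          (f := fun i => dirDeriv (b i) (dirDeriv (b i) w) x)
    _ ≤ N * ∑ i, ‖fderiv ℝ (∇ w) x (b i)‖ ^ 2 := by
        refine mul_le_mul_of_nonneg_left (Finset.sum_le_sum fun i _ => ?_) N.cast_nonneg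
        rw [← inner_fderiv_gradient hw, sq_le_sq, abs_norm]
        simpa using abs_real_inner_le_norm (fderiv ℝ (∇ w) x (b i)) (b i)

end Bochner

section LogTransform

variable {N : ℕ} {p q s : ℝ} {G : Set (𝔼 N)} {u w : 𝔼 N → ℝ} {x : 𝔼 N}

-- `Real.log` is even, so `Real.log (u y)` is the logarithm of the positive function `-u`.
theorem IsStrongSolution.nondivPLaplacian_log (hG : IsOpen G) (hu : IsStrongSolution p q G u)
    (hx : x ∈ G) (hux : u x < 0) (hgx : ∇ u x ≠ 0) (hw : w = fun y => Real.log (u y)) :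
    nondivPLaplacian p (∇ w x) w x = -(p - 1) * ‖∇ w x‖ ^ 4 -
      Real.exp ((q - p + 1) * w x) * ‖∇ w x‖ ^ (q - p + 4) := by
  have hu2 : ContDiffAt ℝ 2 u x := (hu.contDiffAt_three hG hx hgx).of_le (by norm_num)
  have hlog : ContDiffAt ℝ 2 Real.log (u x) := Real.contDiffAt_log.2 hux.ne
  have hgrad : ∇ w x = (u x)⁻¹ • ∇ u x := by
    rw [hw, gradient_comp (hlog.differentiableAt two_ne_zero) (hu2.differentiableAt two_ne_zero),
      Real.deriv_log]
  have hnorm : ‖∇ u x‖ = -u x * ‖∇ w x‖ := by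
    rw [hgrad, norm_smul, norm_inv, Real.norm_eq_abs, abs_of_neg hux]
    field_simp [hux.ne]
  have hexp : Real.exp ((q - p + 1) * w x) = (-u x) ^ (q - p + 1) := by
    rw [hw, Real.rpow_def_of_pos (neg_pos.2 hux), Real.log_neg_eq_log, mul_comm]
  have hinner : ⟪∇ u x, ∇ w x⟫_ℝ = u x * ‖∇ w x‖ ^ 2 := by
    rw [← real_inner_self_eq_norm_sq, ← real_inner_smul_left, hgrad, smul_inv_smul₀ hux.ne]
  have heq := hu.nondivPLaplacian_eq hG hx hgx
  rw [hnorm, Real.mul_rpow (neg_pos.2 hux).le (norm_nonneg _),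
    show q - p + 4 = q - p + 1 + (3 : ℕ) by push_cast; ring,
    Real.rpow_add_natCast (neg_pos.2 hux).ne', ← hexp] at heq
  have hw' : nondivPLaplacian p (∇ w x) w x = deriv (deriv Real.log) (u x) *
      (‖∇ w x‖ ^ 2 * ‖∇ u x‖ ^ 2 + (p - 2) * ⟪∇ u x, ∇ w x⟫_ℝ ^ 2) +
        deriv Real.log (u x) * nondivPLaplacian p (∇ w x) u x := by
    conv_lhs => rw [hw]
    rw [nondivPLaplacian_comp hlog hu2, ← hw]
  rw [hw', hinner, hnorm, hgrad, nondivPLaplacian_smul hu2, heq, ← hgrad, Real.deriv_log',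
    deriv_inv, show q - p + 4 = q - p + 1 + (3 : ℕ) by push_cast; ring]
  field_simp [hux.ne]
  ring

theorem dirDeriv_nondivPLaplacian_gradient (p : ℝ) (hw : ContDiffAt ℝ 3 w x) {z : 𝔼 N → ℝ}
    (hz : z = fun y => ‖∇ w y‖ ^ 2) :
    dirDeriv (∇ w x) (fun y => nondivPLaplacian p (∇ w y) w y) x =
      z x * dirDeriv (∇ w x) (Δ w) x + dirDeriv (∇ w x) z x * Δ w x +
        (p - 2) / 2 * (dirDeriv (∇ w x) (dirDeriv (∇ w x) z) x + ‖∇ z x‖ ^ 2 / 2) := by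
  have hz2 : ContDiffAt ℝ 2 z x := hz ▸ contDiffAt_norm_gradient_sq hw
  have hw2 : ContDiffAt ℝ 2 w x := hw.of_le (by norm_num)
  have dz : DifferentiableAt ℝ z x := hz2.differentiableAt two_ne_zero
  have dΔ : DifferentiableAt ℝ (Δ w) x := differentiableAt_laplacian hw
  have d_inner : DifferentiableAt ℝ (fun y => ⟪∇ z y, ∇ w y⟫_ℝ) x :=
    (differentiableAt_gradient hz2).inner ℝ (differentiableAt_gradient hw2)
  have hsq : ⟪∇ z x, fderiv ℝ (∇ w) x (∇ w x)⟫_ℝ = ‖∇ z x‖ ^ 2 / 2 := by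
    rw [show ∇ z x = (2 : ℝ) • fderiv ℝ (∇ w) x (∇ w x) by rw [hz, gradient_norm_gradient_sq hw2],
      real_inner_smul_left, norm_smul, Real.norm_two, real_inner_self_eq_norm_sq]
    ring
  have hev : (fun y => nondivPLaplacian p (∇ w y) w y) =ᶠ[𝓝 x]
      fun y => z y * Δ w y + (p - 2) / 2 * ⟪∇ z y, ∇ w y⟫_ℝ := by
    filter_upwards [hw.eventually (by simp)] with y hwy
    rw [hz, nondivPLaplacian_gradient_eq p (hwy.of_le (by norm_num))]
  rw [dirDeriv_congr hev, dirDeriv_add (dz.fun_mul dΔ) (d_inner.const_mul _), dirDeriv_mul dz dΔ,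
    dirDeriv_const_mul d_inner, dirDeriv_inner (differentiableAt_gradient hz2)
      (differentiableAt_gradient hw2), hsq, inner_fderiv_gradient hz2]
  ring

theorem nondivPLaplacian_norm_gradient_sq (b : OrthonormalBasis (Fin N) ℝ (𝔼 N)) (p : ℝ)
    (hw : ContDiffAt ℝ 3 w x) {z : 𝔼 N → ℝ} (hz : z = fun y => ‖∇ w y‖ ^ 2) :
    nondivPLaplacian p (∇ w x) z x = 2 * z x * ∑ i, ‖fderiv ℝ (∇ w) x (b i)‖ ^ 2 +
      2 * dirDeriv (∇ w x) (fun y => nondivPLaplacian p (∇ w y) w y) x -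
        2 * dirDeriv (∇ w x) z x * Δ w x - (p - 2) / 2 * ‖∇ z x‖ ^ 2 := by
  have hzx : ‖∇ w x‖ ^ 2 = z x := by rw [hz]
  have hΔ := laplacian_norm_gradient_sq b hw
  rw [← hz] at hΔ
  rw [dirDeriv_nondivPLaplacian_gradient p hw hz, nondivPLaplacian, hzx, hΔ]
  ring

theorem dirDeriv_gradient_log_source (p s : ℝ) (hw : ContDiffAt ℝ 3 w x) (hgx : ∇ w x ≠ 0)
    {z : 𝔼 N → ℝ} (hz : z = fun y => ‖∇ w y‖ ^ 2) :
    dirDeriv (∇ w x) (fun y => -(p - 1) * ‖∇ w y‖ ^ 4 - Real.exp (s * w y) * ‖∇ w y‖ ^ (s + 3)) x =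
      -(p - 1) * (2 * z x * dirDeriv (∇ w x) z x) - Real.exp (s * w x) * z x ^ ((s + 1) / 2) *
        (s * z x ^ 2 + (s + 3) / 2 * dirDeriv (∇ w x) z x) := by
  have hz2 : ContDiffAt ℝ 2 z x := hz ▸ contDiffAt_norm_gradient_sq hw
  have dw : DifferentiableAt ℝ w x := hw.differentiableAt three_ne_zero
  have dz : DifferentiableAt ℝ z x := hz2.differentiableAt two_ne_zero
  have hzx : 0 < z x := by rw [hz]; exact pow_pos (norm_pos_iff.2 hgx) 2
  have hsource : (fun y => -(p - 1) * ‖∇ w y‖ ^ 4 - Real.exp (s * w y) * ‖∇ w y‖ ^ (s + 3)) =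
      fun y => -(p - 1) * (z y * z y) + -1 * (Real.exp (s * w y) * z y ^ ((s + 3) / 2)) := by
    funext y
    have hpow : z y ^ ((s + 3) / 2) = ‖∇ w y‖ ^ (s + 3) := by
      rw [hz, ← Real.rpow_natCast_mul (norm_nonneg _)]
      congr 1
      push_cast
      ring
    rw [hpow, hz]
    ring
  have dE : DifferentiableAt ℝ (fun y => Real.exp (s * w y)) x := by fun_prop
  have dP : DifferentiableAt ℝ (fun y => z y ^ ((s + 3) / 2)) x := dz.rpow_const (.inl hzx.ne')
  have hDE : dirDeriv (∇ w x) (fun y => Real.exp (s * w y)) x =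
      s * Real.exp (s * w x) * z x := by
    simp only [hz, ← real_inner_self_eq_norm_sq, inner_gradient_eq_dirDeriv]
    simp only [dirDeriv, fderiv_exp (dw.const_mul s), fderiv_const_mul dw, smul_apply, smul_eq_mul]
    ring
  have hDP : dirDeriv (∇ w x) (fun y => z y ^ ((s + 3) / 2)) x =
      (s + 3) / 2 * z x ^ ((s + 1) / 2) * dirDeriv (∇ w x) z x := by
    rw [dirDeriv_comp (ψ := fun t : ℝ => t ^ ((s + 3) / 2))
      (Real.differentiableAt_rpow_const_of_ne _ hzx.ne') dz, Real.deriv_rpow_const]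
    ring_nf
  rw [hsource, dirDeriv_add ((dz.fun_mul dz).const_mul _) ((dE.fun_mul dP).const_mul _),
    dirDeriv_const_mul (dz.fun_mul dz), dirDeriv_mul dz dz, dirDeriv_const_mul (dE.fun_mul dP),
    dirDeriv_mul dE dP, hDE, hDP, show (s + 3) / 2 = (s + 1) / 2 + 1 by ring,
    Real.rpow_add_one hzx.ne']
  ring

end LogTransform

section BernsteinAlgebra

variable {n a s A z F T P R : ℝ}

/- The letters are values at a point `x`, where `v = e^w` and `n` is the dimension: `a = p - 1`,
`s = q - p + 1`, `z = |∇w|²`, `F = e^{sw} z^{(s+1)/2}`, `T = ⟨∇w, ∇z⟩ / z`, `P = |∇z|² / z`, and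
`R = ρ / (ρ² - |x - c|²)` for the cutoff on the ball of radius `ρ` around `c`. -/
theorem bernstein_cross_terms_le (hn : 0 < n) (ha : 0 < a) (hz : 0 ≤ z) (hF : 0 ≤ F) :
    2 * a * z * T + (s + 1) * F * T - 2 / n * (a - 1) * (a * z + F) * T ≤
      (a * z + F) * (2 / n * |a - 1| + 2 + |s + 1|) * |T| := by
  have haz : 0 ≤ a * z := by positivity
  have hFX : |(s + 1) * F| ≤ |s + 1| * (a * z + F) := by
    rw [abs_mul, abs_of_nonneg hF]
    gcongr
    linarith
  have hX : |2 / n * (a - 1) * (a * z + F)| = 2 / n * |a - 1| * (a * z + F) := by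
    rw [abs_mul, abs_mul, abs_of_nonneg (add_nonneg haz hF), abs_of_pos (div_pos two_pos hn)]
  have h2 : |2 * (a * z)| ≤ 2 * (a * z + F) := by
    rw [abs_of_nonneg (by positivity)]
    linarith
  calc _ = (2 * (a * z) + (s + 1) * F - 2 / n * (a - 1) * (a * z + F)) * T := by ring
    _ ≤ |2 * (a * z) + (s + 1) * F - 2 / n * (a - 1) * (a * z + F)| * |T| := by
      rw [← abs_mul]
      exact le_abs_self _
    _ ≤ (a * z + F) * (2 / n * |a - 1| + 2 + |s + 1|) * |T| := by
      gcongr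
      linarith [abs_sub (2 * (a * z) + (s + 1) * F) (2 / n * (a - 1) * (a * z + F)),
        abs_add_le (2 * (a * z)) ((s + 1) * F)]

theorem bernstein_source_le (s : ℝ) (ha : 0 < a) (hz : 0 ≤ z) (hF : 0 ≤ F) :
    2 * s * F * z ≤ max s 0 / (2 * a) * (a * z + F) ^ 2 := by
  have hmul : 4 * a * (F * z) ≤ (a * z + F) ^ 2 := by nlinarith [sq_nonneg (a * z - F)]
  calc 2 * s * F * z ≤ 2 * max s 0 * (F * z) := by
        nlinarith [le_max_left s 0, mul_nonneg hF hz]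
    _ = max s 0 / (2 * a) * (4 * a * (F * z)) := by field_simp; ring
    _ ≤ max s 0 / (2 * a) * (a * z + F) ^ 2 := by gcongr

theorem bernstein_sq_le {δ c : ℝ} (hn : 0 < n) (ha : 0 < a) (hδ : δ = 2 / n - max s 0 / (2 * a))
    (hδ0 : 0 < δ) (hc : c = 2 / n * |a - 1| + 2 + |s + 1|) (hz : 0 ≤ z) (hF : 0 ≤ F)
    (hT : T ^ 2 ≤ 16 * R ^ 2 * z) (hP : |P| ≤ 16 * R ^ 2 * z)
    (h : 2 / n * (a * z + F + (a - 1) / 2 * T) ^ 2 ≤ 2 * a * z * T + (s + 1) * F * T +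
      2 * s * F * z - (a - 1) * T ^ 2 + (a - 1) / 2 * P + A * R ^ 2 * z) :
    δ / 2 * (a * z + F) ^ 2 ≤ (8 * c ^ 2 / δ + 24 * |a - 1| + |A|) * R ^ 2 * z := by
  have hcross := bernstein_cross_terms_le (T := T) (s := s) hn ha hz hF
  have hsource := bernstein_source_le s ha hz hF
  rw [← hc] at hcross
  set X := a * z + F
  have hyoung : X * c * |T| ≤ δ / 2 * X ^ 2 + c ^ 2 / (2 * δ) * T ^ 2 := by
    have hsq : 0 ≤ (δ * X - c * |T|) ^ 2 / (2 * δ) := by positivity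
    have hexpand : (δ * X - c * |T|) ^ 2 / (2 * δ) =
        δ / 2 * X ^ 2 + c ^ 2 / (2 * δ) * T ^ 2 - X * c * |T| := by
      rw [← sq_abs T]
      field_simp
      ring
    linarith
  have hA : A * R ^ 2 * z ≤ |A| * R ^ 2 * z := by gcongr; exact le_abs_self A
  have hT' : -(a - 1) * T ^ 2 ≤ |a - 1| * (16 * R ^ 2 * z) :=
    mul_le_mul (neg_le_abs _) hT (sq_nonneg T) (abs_nonneg _)
  have hP' : (a - 1) / 2 * P ≤ |a - 1| / 2 * (16 * R ^ 2 * z) := by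
    calc (a - 1) / 2 * P ≤ |(a - 1) / 2 * P| := le_abs_self _
      _ = |a - 1| / 2 * |P| := by rw [abs_mul, abs_div, abs_two]
      _ ≤ |a - 1| / 2 * (16 * R ^ 2 * z) := by gcongr
  have hcT : c ^ 2 / (2 * δ) * T ^ 2 ≤ 8 * c ^ 2 / δ * R ^ 2 * z := by
    calc _ ≤ c ^ 2 / (2 * δ) * (16 * R ^ 2 * z) := by gcongr
      _ = _ := by field_simp; ring
  have hdrop : 0 ≤ 2 / n * ((a - 1) / 2 * T) ^ 2 := by positivity
  have hδX : δ * X ^ 2 = 2 / n * X ^ 2 - max s 0 / (2 * a) * X ^ 2 := by rw [hδ]; ring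
  linarith

theorem exists_bernstein_bound (hn : 0 < n) (ha : 0 < a) (hs : s * n < 4 * a) (A : ℝ) :
    ∃ C, 0 ≤ C ∧ ∀ z F T P R : ℝ, 0 ≤ z → 0 ≤ F → T ^ 2 ≤ 16 * R ^ 2 * z → |P| ≤ 16 * R ^ 2 * z →
      2 / n * (a * z + F + (a - 1) / 2 * T) ^ 2 ≤ 2 * a * z * T + (s + 1) * F * T + 2 * s * F * z -
        (a - 1) * T ^ 2 + (a - 1) / 2 * P + A * R ^ 2 * z → z ≤ C * R ^ 2 := by
  set δ : ℝ := 2 / n - max s 0 / (2 * a) with hδ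
  have hδ0 : 0 < δ := by
    rw [hδ, sub_pos, div_lt_div_iff₀ (by positivity) hn]
    rcases max_cases s 0 with ⟨h, _⟩ | ⟨h, _⟩ <;> rw [h] <;> nlinarith
  set c : ℝ := 2 / n * |a - 1| + 2 + |s + 1| with hc
  set K : ℝ := 8 * c ^ 2 / δ + 24 * |a - 1| + |A|
  refine ⟨2 * K / δ / a ^ 2, by positivity, fun z F T P R hz hF hT hP h => ?_⟩
  have hK : δ / 2 * (a * z + F) ^ 2 ≤ K * R ^ 2 * z := bernstein_sq_le hn ha hδ hδ0 hc hz hF hT hP h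
  rcases hz.eq_or_lt with rfl | hz0
  · positivity
  rw [div_div, div_mul_eq_mul_div, le_div_iff₀ (by positivity)]
  have hsq : (a * z) ^ 2 ≤ (a * z + F) ^ 2 := by gcongr; linarith
  refine le_of_mul_le_mul_right ?_ hz0
  nlinarith

end BernsteinAlgebra

section Cutoff

variable {N : ℕ} {ρ : ℝ} {c x : 𝔼 N} {z : 𝔼 N → ℝ}

theorem hasDerivAt_mul_inv_pow_sub {r t : ℝ} (M : ℝ) (k : ℕ) (ht : r - t ≠ 0) :
    HasDerivAt (fun t => M * ((r - t) ^ (k + 1))⁻¹) ((k + 1) * M * ((r - t) ^ (k + 2))⁻¹) t := by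
  refine (((((hasDerivAt_id t).const_sub r).fun_pow (k + 1)).fun_inv
    (pow_ne_zero (k + 1) ht)).const_mul M).congr_deriv ?_
  rw [Nat.add_sub_cancel, id]
  push_cast
  field_simp
  ring

theorem deriv_mul_inv_sq_sub {r t : ℝ} (M : ℝ) (ht : r - t ≠ 0) :
    deriv (fun t => M * ((r - t) ^ 2)⁻¹) t = 2 * M * ((r - t) ^ 3)⁻¹ := by
  rw [(hasDerivAt_mul_inv_pow_sub M 1 ht).deriv]
  norm_num

theorem deriv_deriv_mul_inv_sq_sub {r t : ℝ} (M : ℝ) (ht : r - t ≠ 0) :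
    deriv (deriv fun t => M * ((r - t) ^ 2)⁻¹) t = 6 * M * ((r - t) ^ 4)⁻¹ := by
  have hne : ∀ᶠ t in 𝓝 t, r - t ≠ 0 :=
    (continuousAt_const.sub continuousAt_id).eventually_ne ht
  have hev : deriv (fun t => M * ((r - t) ^ 2)⁻¹) =ᶠ[𝓝 t] fun t => 2 * M * ((r - t) ^ 3)⁻¹ :=
    hne.mono fun t => deriv_mul_inv_sq_sub M
  rw [hev.deriv_eq, (hasDerivAt_mul_inv_pow_sub (2 * M) 2 ht).deriv]
  push_cast
  ring

theorem contDiffAt_mul_inv_sq_sub {n : WithTop ℕ∞} {r t : ℝ} (M : ℝ) (ht : r - t ≠ 0) :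
    ContDiffAt ℝ n (fun t => M * ((r - t) ^ 2)⁻¹) t :=
  contDiffAt_const.mul (((contDiffAt_const.sub contDiffAt_id).pow 2).inv (pow_ne_zero 2 ht))

theorem cutoff_pos (hx : ‖x - c‖ < ρ) : 0 < ρ ^ 2 - ‖x - c‖ ^ 2 :=
  sub_pos.2 (pow_lt_pow_left₀ hx (norm_nonneg _) two_ne_zero)

theorem isLocalMin_sub_of_isLocalMax_cutoff (hx : ‖x - c‖ < ρ)
    (hmax : IsLocalMax (fun y => (ρ ^ 2 - ‖y - c‖ ^ 2) ^ 2 * z y) x) :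
    IsLocalMin (fun y => (ρ ^ 2 - ‖x - c‖ ^ 2) ^ 2 * z x * ((ρ ^ 2 - ‖y - c‖ ^ 2) ^ 2)⁻¹ - z y)
      x := by
  have hnear : ∀ᶠ y in 𝓝 x, ‖y - c‖ < ρ :=
    (continuous_id.sub continuous_const).norm.continuousAt.eventually_lt continuousAt_const hx
  filter_upwards [hmax, hnear] with y hy hyρ
  have hy0 := pow_pos (cutoff_pos hyρ) 2
  rw [mul_right_comm, mul_inv_cancel₀ (pow_pos (cutoff_pos hx) 2).ne', one_mul, sub_self,
    sub_nonneg, ← div_eq_mul_inv, le_div_iff₀ hy0, mul_comm]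
  exact hy

theorem gradient_eq_of_isLocalMax_cutoff (hx : ‖x - c‖ < ρ) (hz : DifferentiableAt ℝ z x)
    (hmax : IsLocalMax (fun y => (ρ ^ 2 - ‖y - c‖ ^ 2) ^ 2 * z y) x) :
    ∇ z x = (4 * z x / (ρ ^ 2 - ‖x - c‖ ^ 2)) • (x - c) := by
  have hη := (cutoff_pos hx).ne'
  refine gradient_eq_of_forall_dirDeriv fun a => ?_
  rw [← dirDeriv_eq_of_isLocalMin_sub
      ((contDiffAt_radial (contDiffAt_mul_inv_sq_sub _ hη)).differentiableAt one_ne_zero)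
      hz (isLocalMin_sub_of_isLocalMax_cutoff hx hmax),
    dirDeriv_radial ((contDiffAt_mul_inv_sq_sub _ hη).differentiableAt one_ne_zero),
    deriv_mul_inv_sq_sub _ hη, real_inner_smul_left]
  field_simp
  ring

theorem nondivPLaplacian_le_of_isLocalMax_cutoff (hx : ‖x - c‖ < ρ)
    (hz : ContDiffAt ℝ 2 z x) (hzx : 0 ≤ z x)
    (hmax : IsLocalMax (fun y => (ρ ^ 2 - ‖y - c‖ ^ 2) ^ 2 * z y) x) {p : ℝ} (hp : 1 ≤ p)
    (g : 𝔼 N) :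
    nondivPLaplacian p g z x ≤
      (28 * p + 4 * N) * (ρ / (ρ ^ 2 - ‖x - c‖ ^ 2)) ^ 2 * z x * ‖g‖ ^ 2 := by
  have hη := cutoff_pos hx
  have hψ {n : WithTop ℕ∞} := contDiffAt_mul_inv_sq_sub (n := n)
    ((ρ ^ 2 - ‖x - c‖ ^ 2) ^ 2 * z x) hη.ne'
  have hle := nondivPLaplacian_mono hp g hz (contDiffAt_radial hψ)
    (dirDeriv_dirDeriv_le_of_isLocalMin_sub (contDiffAt_radial hψ) hz
      (isLocalMin_sub_of_isLocalMax_cutoff hx hmax))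
  refine hle.trans ?_
  rw [nondivPLaplacian_radial hψ, deriv_mul_inv_sq_sub _ hη.ne',
    deriv_deriv_mul_inv_sq_sub _ hη.ne']
  have hη2 : ρ ^ 2 - ‖x - c‖ ^ 2 ≤ ρ ^ 2 := sub_le_self _ (sq_nonneg _)
  have hcs : ⟪x - c, g⟫_ℝ ^ 2 ≤ ‖x - c‖ ^ 2 * ‖g‖ ^ 2 := by
    rw [← mul_pow]
    exact sq_le_sq' (neg_le_of_abs_le (abs_real_inner_le_norm _ _)) (real_inner_le_norm _ _)
  have hd : ‖x - c‖ ^ 2 ≤ ρ ^ 2 := (sub_pos.1 hη).le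
  have hsecond : ‖g‖ ^ 2 * ‖x - c‖ ^ 2 + (p - 2) * ⟪x - c, g⟫_ℝ ^ 2 ≤ p * (ρ ^ 2 * ‖g‖ ^ 2) := by
    have hdg : ‖x - c‖ ^ 2 * ‖g‖ ^ 2 ≤ ρ ^ 2 * ‖g‖ ^ 2 := by gcongr
    nlinarith [sq_nonneg ⟪x - c, g⟫_ℝ]
  have hfirst : (ρ ^ 2 - ‖x - c‖ ^ 2) * ((N + p - 2) * ‖g‖ ^ 2) ≤ (N + p) * (ρ ^ 2 * ‖g‖ ^ 2) := by
    have hNp : 0 ≤ (N : ℝ) + p := by positivity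
    nlinarith [mul_nonneg (sub_nonneg.2 hη2) (mul_nonneg hNp (sq_nonneg ‖g‖)),
      mul_nonneg hη.le (sq_nonneg ‖g‖)]
  set η := ρ ^ 2 - ‖x - c‖ ^ 2
  calc _ = z x / η ^ 2 * (24 * (‖g‖ ^ 2 * ‖x - c‖ ^ 2 + (p - 2) * ⟪x - c, g⟫_ℝ ^ 2) +
        4 * (η * ((N + p - 2) * ‖g‖ ^ 2))) := by field_simp; ring
    _ ≤ z x / η ^ 2 * (24 * (p * (ρ ^ 2 * ‖g‖ ^ 2)) + 4 * ((N + p) * (ρ ^ 2 * ‖g‖ ^ 2))) := by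
      gcongr
    _ = _ := by
      field_simp
      ring

end Cutoff

section GradientEstimate

variable {N : ℕ} {p q s : ℝ}

theorem bernstein_inequality_of_log_equation {w z : 𝔼 N → ℝ} {x : 𝔼 N} (hN : 0 < N)
    (hw : ContDiffAt ℝ 3 w x)
    (heq : ∀ᶠ y in 𝓝 x, nondivPLaplacian p (∇ w y) w y =
      -(p - 1) * ‖∇ w y‖ ^ 4 - Real.exp (s * w y) * ‖∇ w y‖ ^ (s + 3))
    (hgx : ∇ w x ≠ 0) (hz : z = fun y => ‖∇ w y‖ ^ 2) {F T : ℝ}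
    (hF : F = Real.exp (s * w x) * z x ^ ((s + 1) / 2)) (hT : T = dirDeriv (∇ w x) z x / z x) :
    2 / N * ((p - 1) * z x + F + (p - 1 - 1) / 2 * T) ^ 2 ≤
      2 * (p - 1) * z x * T + (s + 1) * F * T + 2 * s * F * z x - (p - 1 - 1) * T ^ 2 +
        (p - 1 - 1) / 2 * (‖∇ z x‖ ^ 2 / z x) + nondivPLaplacian p (∇ w x) z x / z x := by
  let b := EuclideanSpace.basisFun (Fin N) ℝ
  have hw2 : ContDiffAt ℝ 2 w x := hw.of_le (by norm_num)
  have : (0 : ℝ) < N := Nat.cast_pos.2 hN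
  have hzx : 0 < z x := by rw [hz]; exact pow_pos (norm_pos_iff.2 hgx) 2
  have hD : dirDeriv (∇ w x) z x = T * z x := by rw [hT, div_mul_cancel₀ _ hzx.ne']
  have hbochner := nondivPLaplacian_norm_gradient_sq b p hw hz
  rw [dirDeriv_congr heq, dirDeriv_gradient_log_source p s hw hgx hz, hD, ← hF] at hbochner
  have hΔ : Δ w x = -((p - 1) * z x + F + (p - 1 - 1) / 2 * T) := by
    have hFz : F * z x = Real.exp (s * w x) * ‖∇ w x‖ ^ (s + 3) := by
      rw [hF, mul_assoc, ← Real.rpow_add_one hzx.ne', hz, ← Real.rpow_natCast_mul (norm_nonneg _)]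
      ring_nf
    have hx := heq.self_of_nhds
    rw [nondivPLaplacian_gradient_eq p hw2, inner_gradient_eq_dirDeriv, ← hFz, ← hz, hD,
      show ‖∇ w x‖ ^ 4 = z x ^ 2 by rw [hz]; ring, show ‖∇ w x‖ ^ 2 = z x by rw [hz]] at hx
    refine mul_left_cancel₀ hzx.ne' ?_
    linear_combination hx
  have hS := sq_laplacian_le b hw2
  rw [hΔ, neg_sq] at hS
  rw [hΔ] at hbochner
  set S := ∑ i, ‖fderiv ℝ (∇ w) x (b i)‖ ^ 2
  set L := (p - 1) * z x + F + (p - 1 - 1) / 2 * T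
  have hquot : nondivPLaplacian p (∇ w x) z x / z x = 2 * S - 4 * (p - 1) * z x * T -
      2 * s * F * z x - (s + 3) * F * T + 2 * T * L -
        (p - 1 - 1) / 2 * (‖∇ z x‖ ^ 2 / z x) := by
    rw [hbochner]
    field_simp
    ring
  calc 2 / N * L ^ 2 ≤ 2 / N * (N * S) := by gcongr
    _ = 2 * S := by field_simp
    _ = _ := by rw [hquot]; simp only [L]; ring

theorem exists_norm_gradient_sq_le_of_isLocalMax_cutoff (hN : 0 < N) (hp : 1 < p)
    (hs : s * N < 4 * (p - 1)) :
    ∃ C, 0 ≤ C ∧ ∀ (w : 𝔼 N → ℝ) (x c : 𝔼 N) (ρ : ℝ), ContDiffAt ℝ 3 w x → ∇ w x ≠ 0 →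
      (∀ᶠ y in 𝓝 x, nondivPLaplacian p (∇ w y) w y =
        -(p - 1) * ‖∇ w y‖ ^ 4 - Real.exp (s * w y) * ‖∇ w y‖ ^ (s + 3)) →
      ‖x - c‖ < ρ → IsLocalMax (fun y => (ρ ^ 2 - ‖y - c‖ ^ 2) ^ 2 * ‖∇ w y‖ ^ 2) x →
        ‖∇ w x‖ ^ 2 ≤ C * (ρ / (ρ ^ 2 - ‖x - c‖ ^ 2)) ^ 2 := by
  obtain ⟨C, hC0, hC⟩ := exists_bernstein_bound (Nat.cast_pos.2 hN) (sub_pos.2 hp) hs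
    (28 * p + 4 * N)
  refine ⟨C, hC0, fun w x c ρ hw hgx heq hx hmax => ?_⟩
  set z : 𝔼 N → ℝ := fun y => ‖∇ w y‖ ^ 2 with hz
  have hzx : 0 < z x := pow_pos (norm_pos_iff.2 hgx) 2
  have hz2 : ContDiffAt ℝ 2 z x := contDiffAt_norm_gradient_sq hw
  have hη := cutoff_pos hx
  have hgrad := gradient_eq_of_isLocalMax_cutoff hx (hz2.differentiableAt two_ne_zero) hmax
  have hnondiv := nondivPLaplacian_le_of_isLocalMax_cutoff hx hz2 hzx.le hmax hp.le (∇ w x)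
  set η := ρ ^ 2 - ‖x - c‖ ^ 2
  have hP : ‖∇ z x‖ ^ 2 / z x ≤ 16 * (ρ / η) ^ 2 * z x := by
    rw [hgrad, norm_smul, mul_pow, Real.norm_eq_abs, sq_abs]
    calc (4 * z x / η) ^ 2 * ‖x - c‖ ^ 2 / z x ≤ (4 * z x / η) ^ 2 * ρ ^ 2 / z x := by gcongr
      _ = 16 * (ρ / η) ^ 2 * z x := by field_simp; ring
  have hT : (dirDeriv (∇ w x) z x / z x) ^ 2 ≤ ‖∇ z x‖ ^ 2 / z x := by
    rw [div_pow, ← inner_gradient_eq_dirDeriv, sq (z x), ← div_div]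
    gcongr
    rw [div_le_iff₀ hzx, hz, ← mul_pow]
    exact sq_le_sq' (neg_le_of_abs_le (abs_real_inner_le_norm _ _)) (real_inner_le_norm _ _)
  refine hC (z x) _ _ _ _ hzx.le (by positivity) (hT.trans hP)
    ((abs_of_nonneg (by positivity)).trans_le hP)
    ((bernstein_inequality_of_log_equation hN hw heq hgx hz rfl rfl).trans ?_)
  gcongr
  rwa [div_le_iff₀ hzx]

variable {G : Set (𝔼 N)} {u : 𝔼 N → ℝ}

theorem gradient_log {x : 𝔼 N} (hu : DifferentiableAt ℝ u x) (hux : u x ≠ 0) :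
    ∇ (fun y => Real.log (u y)) x = (u x)⁻¹ • ∇ u x := by
  rw [gradient_comp (Real.differentiableAt_log hux) hu, Real.deriv_log]

theorem IsStrongSolution.continuousOn_norm_gradient_log_sq (hG : IsOpen G)
    (hu : IsStrongSolution p q G u) (hneg : ∀ x ∈ G, u x < 0) :
    ContinuousOn (fun y => ‖∇ (fun y => Real.log (u y)) y‖ ^ 2) G := fun x hx => by
  have hux := (hneg x hx).ne
  have hev : (fun y => (u y)⁻¹ • ∇ u y) =ᶠ[𝓝 x] ∇ fun y => Real.log (u y) := by
    filter_upwards [hG.mem_nhds hx] with y hy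
    exact (gradient_log ((hu.contDiffAt hG hy).differentiableAt one_ne_zero) (hneg y hy).ne).symm
  have hgrad : ContinuousAt (∇ u) x :=
    (contDiffAt_gradient (m := 0) (hu.contDiffAt hG hx) (by simp)).continuousAt
  exact ((((hu.contDiffAt hG hx).continuousAt.inv₀ hux).smul hgrad).congr
    hev).norm.pow 2 |>.continuousWithinAt

theorem exists_isLocalMax_cutoff {z : 𝔼 N → ℝ} {c : 𝔼 N} {ρ : ℝ} (hρ : 0 < ρ)
    (hz : ContinuousOn z (closedBall c ρ)) (hzc : 0 < z c) :
    ∃ x ∈ ball c ρ, 0 < z x ∧ IsLocalMax (fun y => (ρ ^ 2 - ‖y - c‖ ^ 2) ^ 2 * z y) x ∧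
      ρ ^ 4 * z c ≤ (ρ ^ 2 - ‖x - c‖ ^ 2) ^ 2 * z x := by
  obtain ⟨x, hx, hmax⟩ := (isCompact_closedBall c ρ).exists_isMaxOn
    ⟨c, mem_closedBall_self hρ.le⟩ (ContinuousOn.mul (f := fun y => (ρ ^ 2 - ‖y - c‖ ^ 2) ^ 2)
      (by fun_prop) hz)
  have hle : ρ ^ 4 * z c ≤ (ρ ^ 2 - ‖x - c‖ ^ 2) ^ 2 * z x := by
    calc ρ ^ 4 * z c = (ρ ^ 2 - ‖c - c‖ ^ 2) ^ 2 * z c := by rw [sub_self, norm_zero]; ring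
      _ ≤ (ρ ^ 2 - ‖x - c‖ ^ 2) ^ 2 * z x := hmax (mem_closedBall_self hρ.le)
  have hpos : 0 < (ρ ^ 2 - ‖x - c‖ ^ 2) ^ 2 * z x := lt_of_lt_of_le (by positivity) hle
  have hxb : x ∈ ball c ρ := by
    refine mem_ball.2 (lt_of_le_of_ne (mem_closedBall.1 hx) fun h => ?_)
    rw [dist_eq_norm] at h
    simp [h] at hpos
  exact ⟨x, hxb, pos_of_mul_pos_right hpos (sq_nonneg _),
    hmax.isLocalMax (mem_of_superset (isOpen_ball.mem_nhds hxb) ball_subset_closedBall), hle⟩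

theorem exists_gradient_estimate (hN : 0 < N) (hp : 1 < p) (hq : (q - p + 1) * N < 4 * (p - 1)) :
    ∃ C, 0 ≤ C ∧ ∀ (G : Set (𝔼 N)) (u : 𝔼 N → ℝ) (c : 𝔼 N) (ρ : ℝ), IsOpen G →
      IsStrongSolution p q G u → (∀ x ∈ G, u x < 0) → 0 < ρ → closedBall c ρ ⊆ G →
        ‖∇ u c‖ ^ 2 * ρ ^ 2 ≤ C * u c ^ 2 := by
  obtain ⟨C, hC0, hC⟩ := exists_norm_gradient_sq_le_of_isLocalMax_cutoff hN hp hq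
  refine ⟨C, hC0, fun G u c ρ hG hu hneg hρ hball => ?_⟩
  have hlog {x : 𝔼 N} (hx : x ∈ G) : ∇ (fun y => Real.log (u y)) x = (u x)⁻¹ • ∇ u x :=
    gradient_log ((hu.contDiffAt hG hx).differentiableAt one_ne_zero) (hneg x hx).ne
  have hc : c ∈ G := hball (mem_closedBall_self hρ.le)
  set w : 𝔼 N → ℝ := fun y => Real.log (u y) with hw
  suffices hwc : ‖∇ w c‖ ^ 2 * ρ ^ 2 ≤ C by
    rw [hlog hc, norm_smul, mul_pow, norm_inv, inv_pow, Real.norm_eq_abs, sq_abs] at hwc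
    have := sq_pos_of_neg (hneg c hc)
    rwa [mul_assoc, inv_mul_le_iff₀ this, mul_comm (u c ^ 2)] at hwc
  rcases eq_or_ne (∇ w c) 0 with h0 | h0
  · simpa [h0] using hC0
  obtain ⟨x, hxb, hzx, hmax, hle⟩ := exists_isLocalMax_cutoff hρ
    ((hu.continuousOn_norm_gradient_log_sq hG hneg).mono hball) (pow_pos (norm_pos_iff.2 h0) 2)
  have hx : x ∈ G := hball (ball_subset_closedBall hxb)
  have hwx : ∇ w x ≠ 0 := norm_ne_zero_iff.1 (pow_ne_zero_iff two_ne_zero |>.1 hzx.ne')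
  have hgx : ∇ u x ≠ 0 := fun h => hwx (by rw [hlog hx, h, smul_zero])
  rw [mem_ball_iff_norm] at hxb
  have hη := cutoff_pos hxb
  have heq : ∀ᶠ y in 𝓝 x, nondivPLaplacian p (∇ w y) w y = -(p - 1) * ‖∇ w y‖ ^ 4 -
      Real.exp ((q - p + 1) * w y) * ‖∇ w y‖ ^ (q - p + 1 + 3) := by
    filter_upwards [(hu.isOpen_regular hG).mem_nhds ⟨hx, hgx⟩] with y hy
    rw [hu.nondivPLaplacian_log hG hy.1 (hneg y hy.1) hy.2 hw]
    ring_nf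
  have hzC := hC w x c ρ ((hu.contDiffAt_three hG hx hgx).log (hneg x hx).ne) hwx heq hxb hmax
  refine le_of_mul_le_mul_right ?_ (sq_pos_of_pos hρ)
  calc ‖∇ w c‖ ^ 2 * ρ ^ 2 * ρ ^ 2 = ρ ^ 4 * ‖∇ w c‖ ^ 2 := by ring
    _ ≤ (ρ ^ 2 - ‖x - c‖ ^ 2) ^ 2 * ‖∇ w x‖ ^ 2 := hle
    _ ≤ (ρ ^ 2 - ‖x - c‖ ^ 2) ^ 2 * (C * (ρ / (ρ ^ 2 - ‖x - c‖ ^ 2)) ^ 2) := by gcongr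
    _ = C * ρ ^ 2 := by field_simp

end GradientEstimate

section FundamentalSolution

variable {N : ℕ} {p β r ρ : ℝ}

/-- The radial profile of the fundamental solution `mup`. -/
noncomputable def muRad (N : ℕ) (p r : ℝ) : ℝ :=
  if p < N then ((p - 1) / ((N : ℝ) - p)) * r ^ ((p - (N : ℝ)) / (p - 1)) else -Real.log r

theorem mup_eq_muRad (p : ℝ) (x : 𝔼 N) : mup N p x = muRad N p ‖x‖ := rfl

theorem muRad_of_lt (hp : 1 < p) (hβ : β * (p - 1) = N - p) (h : p < N) (r : ℝ) :
    muRad N p r = (p - 1) / (N - p) * r ^ (-β) := by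
  have hexp : (p - N) / (p - 1) = -β := by
    rw [div_eq_iff (by linarith)]
    linarith
  rw [muRad, if_pos h, hexp]

theorem muRad_self (N : ℕ) (r : ℝ) : muRad N N r = -Real.log r :=
  if_neg (lt_irrefl _)

theorem exponent_eq_zero (hN : 1 < (N : ℝ)) (hβ : β * ((N : ℝ) - 1) = N - N) : β = 0 := by
  rw [sub_self] at hβ
  exact (mul_eq_zero.1 hβ).resolve_right (by linarith)

theorem hasDerivAt_muRad (hp : 1 < p) (hpN : p ≤ N) (hβ : β * (p - 1) = N - p) (hr : 0 < r) :
    HasDerivAt (muRad N p) (-r ^ (-β - 1)) r := by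
  rcases hpN.lt_or_eq with h | rfl
  · rw [funext (muRad_of_lt hp hβ h)]
    refine ((Real.hasDerivAt_rpow_const (p := -β) (Or.inl hr.ne')).const_mul _).congr_deriv ?_
    have hNp : (N : ℝ) - p ≠ 0 := by linarith
    linear_combination r ^ (-β - 1) / (N - p) * (-hβ) - r ^ (-β - 1) * (div_self hNp)
  · rw [funext (muRad_self N), exponent_eq_zero hp hβ, neg_zero, zero_sub, Real.rpow_neg_one]
    exact (Real.hasDerivAt_log hr.ne').neg

theorem strictAntiOn_muRad (hp : 1 < p) (hpN : p ≤ N) : StrictAntiOn (muRad N p) (Ioi 0) := by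
  have hβ : ((N : ℝ) - p) / (p - 1) * (p - 1) = N - p := div_mul_cancel₀ _ (by linarith)
  refine strictAntiOn_of_deriv_neg (convex_Ioi 0) (fun r hr =>
    (hasDerivAt_muRad hp hpN hβ hr).continuousAt.continuousWithinAt) fun r hr => ?_
  rw [interior_Ioi] at hr
  rw [(hasDerivAt_muRad hp hpN hβ hr).deriv, neg_lt_zero]
  exact Real.rpow_pos_of_pos hr _

theorem tendsto_muRad_nhdsGT_zero (hp : 1 < p) (hpN : p ≤ N) :
    Tendsto (muRad N p) (𝓝[>] 0) atTop := by
  rcases hpN.lt_or_eq with h | rfl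
  · have hβ : ((N : ℝ) - p) / (p - 1) * (p - 1) = N - p := div_mul_cancel₀ _ (by linarith)
    have hNp : 0 < (N : ℝ) - p := sub_pos.2 h
    have hp1 : 0 < p - 1 := sub_pos.2 hp
    rw [funext (muRad_of_lt hp hβ h)]
    exact (tendsto_rpow_neg_nhdsGT_zero (neg_lt_zero.2 (div_pos hNp hp1))).const_mul_atTop
      (div_pos hp1 hNp)
  · rw [funext (muRad_self N)]
    exact tendsto_neg_atBot_atTop.comp Real.tendsto_log_nhdsGT_zero

theorem le_muRad_mul (hp : 1 < p) (hpN : p ≤ N) (hβ : β * (p - 1) = N - p) (hr : 0 < r)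
    (hρ : 0 < ρ) : ρ ^ (-β) * muRad N p r - |Real.log ρ| ≤ muRad N p (r * ρ) := by
  rcases hpN.lt_or_eq with h | rfl
  · rw [muRad_of_lt hp hβ h, muRad_of_lt hp hβ h, Real.mul_rpow hr.le hρ.le]
    linarith [abs_nonneg (Real.log ρ)]
  · rw [muRad_self, muRad_self, exponent_eq_zero hp hβ, neg_zero, Real.rpow_zero,
      Real.log_mul hr.ne' hρ.ne']
    linarith [le_abs_self (Real.log ρ)]

end FundamentalSolution

section PowerProfile

variable {N : ℕ} {β C : ℝ} {f : ℝ → ℝ} {y : 𝔼 N}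

theorem contDiffAt_two_of_hasDerivAt {ψ ψ' : ℝ → ℝ} {s : ℝ}
    (hψ : ∀ᶠ t in 𝓝 s, HasDerivAt ψ (ψ' t) t) (hψ' : ContDiffAt ℝ 1 ψ' s) :
    ContDiffAt ℝ 2 ψ s := by
  rw [show (2 : WithTop ℕ∞) = 1 + 1 from rfl]
  refine (contDiffAt_succ_iff_hasFDerivAt (n := 1)).2
    ⟨fun t => .toSpanSingleton ℝ (ψ' t), ⟨_, hψ, fun _ ht => ht.hasFDerivAt⟩, ?_⟩
  exact (ContinuousLinearMap.toSpanSingletonCLE (𝕜 := ℝ) (E := ℝ)).contDiff.comp_contDiffAt s hψ'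

theorem hasDerivAt_comp_sqrt_of_power (hf : ∀ r, 0 < r → HasDerivAt f (-(C * r ^ (-β - 1))) r)
    {s : ℝ} (hs : 0 < s) :
    HasDerivAt (fun s => f √s) (-(C / 2) * s ^ (-β / 2 - 1)) s := by
  have hs' : 0 < √s := Real.sqrt_pos.2 hs
  have hpow : s ^ (-β / 2 - 1) = √s ^ (-β - 1) / √s := by
    rw [← Real.rpow_sub_one hs'.ne', Real.sqrt_eq_rpow, ← Real.rpow_mul hs.le]
    ring_nf
  refine ((hf _ hs').comp s (Real.hasDerivAt_sqrt hs.ne')).congr_deriv ?_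
  rw [hpow]
  ring

theorem contDiffAt_comp_sqrt_of_power (hf : ∀ r, 0 < r → HasDerivAt f (-(C * r ^ (-β - 1))) r)
    {s : ℝ} (hs : 0 < s) : ContDiffAt ℝ 2 (fun s => f √s) s :=
  contDiffAt_two_of_hasDerivAt
    ((lt_mem_nhds hs).mono fun _ ht => hasDerivAt_comp_sqrt_of_power hf ht)
    (contDiffAt_const.mul (Real.contDiffAt_rpow_const (Or.inl hs.ne')))

theorem comp_norm_eq_comp_sqrt (f : ℝ → ℝ) :
    (fun y : 𝔼 N => f ‖y‖) = fun y => f √(‖y - 0‖ ^ 2) := by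
  simp only [sub_zero, Real.sqrt_sq (norm_nonneg _)]

theorem contDiffAt_comp_norm_of_power (hf : ∀ r, 0 < r → HasDerivAt f (-(C * r ^ (-β - 1))) r)
    (hy : y ≠ 0) : ContDiffAt ℝ 2 (fun y : 𝔼 N => f ‖y‖) y := by
  have hy2 : 0 < ‖y - 0‖ ^ 2 := by rw [sub_zero]; positivity
  rw [comp_norm_eq_comp_sqrt]
  exact contDiffAt_radial (ψ := fun s => f √s) (contDiffAt_comp_sqrt_of_power hf hy2)

theorem gradient_comp_norm_of_power (hf : ∀ r, 0 < r → HasDerivAt f (-(C * r ^ (-β - 1))) r)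
    (hy : y ≠ 0) : ∇ (fun y : 𝔼 N => f ‖y‖) y = -(C * ‖y‖ ^ (-β - 2)) • y := by
  have hy2 : 0 < ‖y - 0‖ ^ 2 := by rw [sub_zero]; positivity
  have h := hasDerivAt_comp_sqrt_of_power hf hy2
  rw [comp_norm_eq_comp_sqrt, gradient_radial (ψ := fun s => f √s) h.differentiableAt, h.deriv,
    sub_zero, ← Real.rpow_natCast_mul (norm_nonneg _)]
  congr 1
  ring_nf

theorem nondivPLaplacian_comp_norm_of_power {p : ℝ} (hβ : β * (p - 1) = N - p)
    (hf : ∀ r, 0 < r → HasDerivAt f (-(C * r ^ (-β - 1))) r) (hy : y ≠ 0) (g : 𝔼 N) :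
    nondivPLaplacian p g (fun y => f ‖y‖) y =
      C * ‖y‖ ^ (-β - 2) * ((p - 2) * (β + 2) * (⟪y, g⟫_ℝ ^ 2 / ‖y‖ ^ 2 - ‖g‖ ^ 2)) := by
  have hy2 : 0 < ‖y‖ ^ 2 := by positivity
  have hψ {s : ℝ} (hs : 0 < s) := hasDerivAt_comp_sqrt_of_power hf hs
  have hderiv : deriv (fun s => f √s) =ᶠ[𝓝 (‖y‖ ^ 2)] fun s => -(C / 2) * s ^ (-β / 2 - 1) :=
    (lt_mem_nhds hy2).mono fun s hs => (hψ hs).deriv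
  have hderiv2 : deriv (deriv fun s => f √s) (‖y‖ ^ 2) =
      C / 2 * (β / 2 + 1) * ((‖y‖ ^ 2) ^ (-β / 2 - 1) / ‖y‖ ^ 2) := by
    rw [hderiv.deriv_eq,
      ((Real.hasDerivAt_rpow_const (Or.inl hy2.ne')).const_mul (-(C / 2))).deriv,
      Real.rpow_sub_one hy2.ne' (-β / 2 - 1)]
    ring
  have hpow : (‖y‖ ^ 2) ^ (-β / 2 - 1) = ‖y‖ ^ (-β - 2) := by
    rw [← Real.rpow_natCast_mul (norm_nonneg _)]
    ring_nf
  rw [comp_norm_eq_comp_sqrt, nondivPLaplacian_radial (ψ := fun s => f √s)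
    (by simpa only [sub_zero] using contDiffAt_comp_sqrt_of_power hf hy2), sub_zero, hderiv2,
    (hψ hy2).deriv, hpow, show (N : ℝ) + p - 2 = (β + 2) * (p - 1) by linarith]
  field

end PowerProfile

section Gaussian

variable {N : ℕ} (α : ℝ) (c y : 𝔼 N)

theorem contDiff_gaussian : ContDiff ℝ 2 fun y => Real.exp (-(α / 2) * ‖y - c‖ ^ 2) := by
  have h : ContDiff ℝ 2 fun y => ‖y - c‖ ^ 2 := (contDiff_id.sub contDiff_const).norm_sq ℝ
  fun_prop

theorem deriv_exp_const_mul (k : ℝ) :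
    deriv (fun s => Real.exp (k * s)) = fun s => k * Real.exp (k * s) := by
  funext s
  simpa [mul_comm] using ((hasDerivAt_id s).const_mul k).exp.deriv

theorem gradient_gaussian : ∇ (fun y => Real.exp (-(α / 2) * ‖y - c‖ ^ 2)) y =
    -(α * Real.exp (-(α / 2) * ‖y - c‖ ^ 2)) • (y - c) := by
  rw [gradient_radial (ψ := fun s => Real.exp (-(α / 2) * s)) (by fun_prop), deriv_exp_const_mul]
  congr 1
  ring

theorem nondivPLaplacian_gaussian (p : ℝ) (g : 𝔼 N) :
    nondivPLaplacian p g (fun y => Real.exp (-(α / 2) * ‖y - c‖ ^ 2)) y =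
      α * Real.exp (-(α / 2) * ‖y - c‖ ^ 2) *
        (α * (‖g‖ ^ 2 * ‖y - c‖ ^ 2 + (p - 2) * ⟪y - c, g⟫_ℝ ^ 2) - (N + p - 2) * ‖g‖ ^ 2) := by
  rw [nondivPLaplacian_radial (ψ := fun s => Real.exp (-(α / 2) * s)) (by fun_prop),
    deriv_exp_const_mul, deriv_const_mul_field', deriv_exp_const_mul]
  ring

end Gaussian

section Superharmonic

variable {N : ℕ} {p q : ℝ} {G : Set (𝔼 N)} {u v φ : 𝔼 N → ℝ} {x y : 𝔼 N}

/-- `φ` is a `C²` function with nonvanishing gradient and nonnegative `p`-Laplacian at `y`. These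
are the test functions of `IsPSuperharmonicOn`; as the gradient does not vanish, the sign of the
`p`-Laplacian is the sign of its nondivergence form. -/
def IsPSubharmonicAt (p : ℝ) (φ : 𝔼 N → ℝ) (y : 𝔼 N) : Prop :=
  ContDiffAt ℝ 2 φ y ∧ ∇ φ y ≠ 0 ∧ 0 ≤ nondivPLaplacian p (∇ φ y) φ y

/-- A strict notion of `p`-superharmonic function on `G` in the viscosity sense: no test function of
`IsPSubharmonicAt` touches `v` from below at a point of `G`. Strictness spares any perturbation
argument in the comparison principle. -/
def IsPSuperharmonicOn (p : ℝ) (G : Set (𝔼 N)) (v : 𝔼 N → ℝ) : Prop :=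
  ContinuousOn v G ∧
    ∀ y ∈ G, ∀ φ, IsPSubharmonicAt p φ y → ¬ IsLocalMin (fun z => v z - φ z) y

theorem IsPSuperharmonicOn.mono {H : Set (𝔼 N)} (hv : IsPSuperharmonicOn p G v) (h : H ⊆ G) :
    IsPSuperharmonicOn p H v :=
  ⟨hv.1.mono h, fun y hy => hv.2 y (h hy)⟩

theorem IsStrongSolution.isPSuperharmonicOn_neg (hp : 1 ≤ p) (hG : IsOpen G)
    (hu : IsStrongSolution p q G u) : IsPSuperharmonicOn p G fun x => -u x := by
  refine ⟨hu.1.continuousOn.neg, fun y hy φ ⟨hφ, hφy, hsub⟩ hmin => ?_⟩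
  have hu₁ := (hu.contDiffAt hG hy).differentiableAt one_ne_zero
  have hgrad : ∇ φ y = (-1 : ℝ) • ∇ u y := gradient_eq_of_forall_dirDeriv fun a => by
    rw [← dirDeriv_eq_of_isLocalMin_sub hu₁.fun_neg (hφ.differentiableAt two_ne_zero) hmin,
      real_inner_smul_left, inner_gradient_eq_dirDeriv, ← dirDeriv_const_mul hu₁]
    simp only [neg_one_mul]
  have huy : ∇ u y ≠ 0 := right_ne_zero_of_smul (hgrad ▸ hφy)
  have hu₂ : ContDiffAt ℝ 2 u y := (hu.contDiffAt_three hG hy huy).of_le (by norm_num)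
  have hle := nondivPLaplacian_mono hp (∇ φ y) hφ hu₂.neg
    (dirDeriv_dirDeriv_le_of_isLocalMin_sub hu₂.neg hφ hmin)
  have heq : nondivPLaplacian p (∇ φ y) (fun x => -u x) y = -‖∇ u y‖ ^ (q - p + 4) := by
    simp only [← neg_one_mul (u _)]
    rw [nondivPLaplacian_const_mul hu₂, hgrad, nondivPLaplacian_smul hu₂,
      hu.nondivPLaplacian_eq hG hy huy]
    ring
  have hpos : 0 < ‖∇ u y‖ ^ (q - p + 4) := Real.rpow_pos_of_pos (norm_pos_iff.2 huy) _
  linarith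

theorem dirDeriv_comp_smul {E : Type*} [NormedAddCommGroup E] [NormedSpace ℝ E] (f : E → ℝ)
    (s : ℝ) (a : E) :
    dirDeriv a (fun x => f (s • x)) = fun x => s * dirDeriv a f (s • x) := by
  funext x
  simp only [dirDeriv, fderiv_comp_smul, smul_apply, smul_eq_mul]

theorem contDiffAt_comp_smul {n : WithTop ℕ∞} {s : ℝ} (hφ : ContDiffAt ℝ n φ (s • x)) :
    ContDiffAt ℝ n (fun x => φ (s • x)) x :=
  ContDiffAt.comp x hφ (contDiffAt_id.const_smul s)

theorem nondivPLaplacian_comp_smul {s : ℝ} (hφ : ContDiffAt ℝ 2 φ (s • x)) (g : 𝔼 N) :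
    nondivPLaplacian p g (fun x => φ (s • x)) x = s ^ 2 * nondivPLaplacian p g φ (s • x) := by
  have hdir (a : 𝔼 N) : dirDeriv a (dirDeriv a fun x => φ (s • x)) x =
      s ^ 2 * dirDeriv a (dirDeriv a φ) (s • x) := by
    rw [dirDeriv_comp_smul, dirDeriv_const_mul (f := fun x => dirDeriv a φ (s • x))
      ((differentiableAt_dirDeriv hφ a).comp x (differentiableAt_id.const_smul s)),
      dirDeriv_comp_smul]
    ring
  rw [nondivPLaplacian, nondivPLaplacian,
    laplacian_eq_sum_dirDeriv (EuclideanSpace.basisFun _ ℝ) (contDiffAt_comp_smul hφ),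
    laplacian_eq_sum_dirDeriv (EuclideanSpace.basisFun _ ℝ) hφ]
  simp only [hdir, ← Finset.mul_sum]
  ring

theorem IsPSubharmonicAt.comp_smul {s : ℝ} (hs : s ≠ 0) (hφ : IsPSubharmonicAt p φ (s • x)) :
    IsPSubharmonicAt p (fun x => φ (s • x)) x := by
  obtain ⟨hφ, hgrad, hsub⟩ := hφ
  have hgrad_eq : ∇ (fun x => φ (s • x)) x = s • ∇ φ (s • x) :=
    gradient_eq_of_forall_dirDeriv fun a => by
      rw [dirDeriv_comp_smul, real_inner_smul_left, inner_gradient_eq_dirDeriv]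
  refine ⟨contDiffAt_comp_smul hφ, hgrad_eq ▸ smul_ne_zero hs hgrad, ?_⟩
  rw [hgrad_eq, nondivPLaplacian_comp_smul hφ, nondivPLaplacian_smul hφ]
  positivity

theorem IsPSubharmonicAt.const_mul {m : ℝ} (hm : 0 < m) (hφ : IsPSubharmonicAt p φ x) :
    IsPSubharmonicAt p (fun x => m * φ x) x := by
  obtain ⟨hφ, hgrad, hsub⟩ := hφ
  have hgrad_eq : ∇ (fun x => m * φ x) x = m • ∇ φ x :=
    gradient_eq_of_forall_dirDeriv fun a => by
      rw [dirDeriv_const_mul (hφ.differentiableAt two_ne_zero), real_inner_smul_left,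
        inner_gradient_eq_dirDeriv]
  refine ⟨contDiffAt_const.mul hφ, hgrad_eq ▸ smul_ne_zero hm.ne' hgrad, ?_⟩
  rw [hgrad_eq, nondivPLaplacian_const_mul hφ, nondivPLaplacian_smul hφ]
  positivity

theorem IsPSuperharmonicOn.rescale (hv : IsPSuperharmonicOn p G v) {m r : ℝ} (hm : 0 < m)
    (hr : r ≠ 0) : IsPSuperharmonicOn p ((r • ·) ⁻¹' G) fun y => v (r • y) / m := by
  refine ⟨(hv.1.comp (f := fun y => r • y) (continuous_const_smul r).continuousOn
    fun _ hy => hy).div_const m, fun y hy φ hφ hmin => ?_⟩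
  refine hv.2 (r • y) hy (fun z => m * φ (r⁻¹ • z))
    (.const_mul hm (.comp_smul (inv_ne_zero hr) (by rwa [inv_smul_smul₀ hr]))) ?_
  have hcont : Tendsto (fun z : 𝔼 N => r⁻¹ • z) (𝓝 (r • y)) (𝓝 y) := by
    simpa only [inv_smul_smul₀ hr] using (continuous_const_smul r⁻¹).tendsto (r • y)
  filter_upwards [hcont.eventually hmin] with z hz
  simp only [smul_inv_smul₀ hr, inv_smul_smul₀ hr] at hz ⊢
  have := mul_le_mul_of_nonneg_left hz hm.le
  rwa [mul_sub, mul_sub, mul_div_cancel₀ _ hm.ne', mul_div_cancel₀ _ hm.ne'] at this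

theorem IsPSuperharmonicOn.le_on_annulus {c : 𝔼 N} {r₁ r₂ : ℝ}
    (hv : IsPSuperharmonicOn p (closedBall c r₂ \ ball c r₁) v)
    (hφc : ContinuousOn φ (closedBall c r₂ \ ball c r₁))
    (hφ : ∀ y ∈ ball c r₂ \ closedBall c r₁, IsPSubharmonicAt p φ y)
    (hle : ∀ y ∈ sphere c r₁ ∪ sphere c r₂, φ y ≤ v y) :
    ∀ y ∈ closedBall c r₂ \ ball c r₁, φ y ≤ v y := by
  intro y hy
  obtain ⟨x, hx, hmin⟩ := ((isCompact_closedBall c r₂).diff isOpen_ball).exists_isMinOn ⟨y, hy⟩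
    (f := fun z => v z - φ z) (hv.1.sub hφc)
  suffices φ x ≤ v x from sub_nonneg.1 ((sub_nonneg.2 this).trans (hmin hy))
  by_cases hbdry : x ∈ sphere c r₁ ∪ sphere c r₂
  · exact hle x hbdry
  have hint : x ∈ ball c r₂ \ closedBall c r₁ := by
    simp only [mem_union, mem_sphere, not_or] at hbdry
    simp only [Set.mem_sdiff, mem_closedBall, mem_ball, not_lt, not_le] at hx ⊢
    exact ⟨lt_of_le_of_ne hx.1 hbdry.2, lt_of_le_of_ne hx.2 (Ne.symm hbdry.1)⟩
  have hmem : closedBall c r₂ \ ball c r₁ ∈ 𝓝 x :=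
    mem_of_superset ((isOpen_ball.sdiff isClosed_closedBall).mem_nhds hint)
      (sdiff_subset_sdiff ball_subset_closedBall ball_subset_closedBall)
  exact absurd (hmin.isLocalMin hmem) (hv.2 x hx φ (hφ x hint))

end Superharmonic

section Barrier

theorem norm_sq_mul_norm_sq_sub_inner_sq_comm {F : Type*} [NormedAddCommGroup F]
    [InnerProductSpace ℝ F] {y d g : F} {c e : ℝ} (hg : g = -(c • y) - e • d) :
    c ^ 2 * (‖y‖ ^ 2 * ‖g‖ ^ 2 - ⟪y, g⟫_ℝ ^ 2) = e ^ 2 * (‖d‖ ^ 2 * ‖g‖ ^ 2 - ⟪d, g⟫_ℝ ^ 2) := by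
  subst hg
  simp only [← real_inner_self_eq_norm_sq, inner_sub_left, inner_sub_right, inner_neg_left,
    inner_neg_right, real_inner_smul_left, real_inner_smul_right, real_inner_comm y d]
  ring

theorem inner_sq_le {F : Type*} [NormedAddCommGroup F] [InnerProductSpace ℝ F] (d g : F) :
    ⟪d, g⟫_ℝ ^ 2 ≤ ‖d‖ ^ 2 * ‖g‖ ^ 2 := by
  rw [← sq_abs, ← mul_pow]
  gcongr
  exact abs_real_inner_le_norm d g

theorem mul_norm_sq_sub_inner_sq_div_le {F : Type*} [NormedAddCommGroup F] [InnerProductSpace ℝ F]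
    {y d g : F} {c e K : ℝ} (hg : g = -(c • y) - e • d) (hy : y ≠ 0) (hdy : ‖d‖ ≤ ‖y‖)
    (hc : 0 ≤ c) (he : 0 ≤ e) (hK : 0 ≤ K) (h : c = 0 ∨ K * (e * ‖d‖) ≤ c * ‖y‖) :
    K * (c * (‖g‖ ^ 2 - ⟪y, g⟫_ℝ ^ 2 / ‖y‖ ^ 2)) ≤ e * ‖g‖ ^ 2 := by
  rcases hc.eq_or_lt with rfl | hc
  · rw [zero_mul, mul_zero]
    positivity
  have hKe : K * (e * ‖d‖) ≤ c * ‖y‖ := h.resolve_left hc.ne'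
  refine le_of_mul_le_mul_left ?_ (mul_pos hc (pow_pos (norm_pos_iff.2 hy) 2))
  calc c * ‖y‖ ^ 2 * (K * (c * (‖g‖ ^ 2 - ⟪y, g⟫_ℝ ^ 2 / ‖y‖ ^ 2)))
      = K * (c ^ 2 * (‖y‖ ^ 2 * ‖g‖ ^ 2 - ⟪y, g⟫_ℝ ^ 2)) := by field
    _ = K * (e ^ 2 * (‖d‖ ^ 2 * ‖g‖ ^ 2 - ⟪d, g⟫_ℝ ^ 2)) := by
        rw [norm_sq_mul_norm_sq_sub_inner_sq_comm hg]
    _ ≤ K * (e ^ 2 * (‖d‖ ^ 2 * ‖g‖ ^ 2)) := by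
        gcongr
        exact sub_le_self _ (sq_nonneg _)
    _ = K * (e * ‖d‖) * ‖d‖ * (e * ‖g‖ ^ 2) := by ring
    _ ≤ c * ‖y‖ * ‖y‖ * (e * ‖g‖ ^ 2) := by gcongr
    _ = c * ‖y‖ ^ 2 * (e * ‖g‖ ^ 2) := by ring

theorem min_one_mul_norm_sq_le {F : Type*} [NormedAddCommGroup F] [InnerProductSpace ℝ F] (p : ℝ)
    (d g : F) :
    min 1 (p - 1) * (‖g‖ ^ 2 * ‖d‖ ^ 2) ≤ ‖g‖ ^ 2 * ‖d‖ ^ 2 + (p - 2) * ⟪d, g⟫_ℝ ^ 2 := by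
  have hinner := inner_sq_le d g
  rcases le_total 2 p with hp | hp
  · rw [min_eq_left (by linarith)]
    have : 0 ≤ (p - 2) * ⟪d, g⟫_ℝ ^ 2 := mul_nonneg (by linarith) (sq_nonneg _)
    linarith
  · rw [min_eq_right (by linarith)]
    nlinarith

theorem barrier_nonneg {F : Type*} [NormedAddCommGroup F] [InnerProductSpace ℝ F] {y d g : F}
    {c e n p α β : ℝ} (hg : g = -(c • y) - e • d) (hy : y ≠ 0) (hdy : ‖d‖ ≤ ‖y‖) (hc : 0 ≤ c)
    (he : 0 ≤ e) (hβ : 0 ≤ β) (h : c = 0 ∨ |p - 2| * (β + 2) * (e * ‖d‖) ≤ c * ‖y‖)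
    (hα : 0 ≤ α) (hαn : n + |p - 2| + 1 ≤ α * (min 1 (p - 1) * ‖d‖ ^ 2)) :
    0 ≤ c * ((p - 2) * (β + 2) * (⟪y, g⟫_ℝ ^ 2 / ‖y‖ ^ 2 - ‖g‖ ^ 2)) +
      e * (α * (‖g‖ ^ 2 * ‖d‖ ^ 2 + (p - 2) * ⟪d, g⟫_ℝ ^ 2) - (n + p - 2) * ‖g‖ ^ 2) := by
  have hpower := mul_norm_sq_sub_inner_sq_div_le hg hy hdy hc he (by positivity) h
  have hangle : 0 ≤ ‖g‖ ^ 2 - ⟪y, g⟫_ℝ ^ 2 / ‖y‖ ^ 2 := by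
    rw [sub_nonneg, div_le_iff₀ (by positivity), mul_comm]
    exact inner_sq_le y g
  have hsign : (p - 2) * ((β + 2) * (c * (‖g‖ ^ 2 - ⟪y, g⟫_ℝ ^ 2 / ‖y‖ ^ 2))) ≤
      |p - 2| * ((β + 2) * (c * (‖g‖ ^ 2 - ⟪y, g⟫_ℝ ^ 2 / ‖y‖ ^ 2))) :=
    mul_le_mul_of_nonneg_right (le_abs_self _) (by positivity)
  have hgaussian : ‖g‖ ^ 2 ≤
      α * (‖g‖ ^ 2 * ‖d‖ ^ 2 + (p - 2) * ⟪d, g⟫_ℝ ^ 2) - (n + p - 2) * ‖g‖ ^ 2 := by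
    have h₁ := mul_le_mul_of_nonneg_left (min_one_mul_norm_sq_le p d g) hα
    have h₂ := mul_le_mul_of_nonneg_right hαn (sq_nonneg ‖g‖)
    have h₃ := mul_le_mul_of_nonneg_right (le_abs_self (p - 2)) (sq_nonneg ‖g‖)
    linarith
  have := mul_le_mul_of_nonneg_left hgaussian he
  linarith

theorem barrier_gradient_ne_zero {F : Type*} [NormedAddCommGroup F] [NormedSpace ℝ F] {y d : F}
    {c e : ℝ} (hc : 0 ≤ c) (he : 0 < e) (hd : d ≠ 0)
    (h : c = 0 ∨ 2 * (e * ‖d‖) ≤ c * ‖y‖) : -(c • y) - e • d ≠ 0 := by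
  intro h0
  have hnorm : c * ‖y‖ = e * ‖d‖ := by
    rw [← norm_smul_of_nonneg hc, ← norm_smul_of_nonneg he.le, ← sub_eq_zero.1 h0, norm_neg]
  have hpos : 0 < e * ‖d‖ := mul_pos he (norm_pos_iff.2 hd)
  rcases h with rfl | h <;> linarith

variable {N : ℕ} {p β γ ε α k a : ℝ} {x y : 𝔼 N}

theorem isPSubharmonicAt_muRad (hp : 1 < p) (hpN : p ≤ N) (ha : 0 < a) (k : ℝ) (hy : y ≠ 0) :
    IsPSubharmonicAt p (fun y : 𝔼 N => a * muRad N p ‖y‖ + k) y := by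
  have hβ : ((N : ℝ) - p) / (p - 1) * (p - 1) = N - p := div_mul_cancel₀ _ (by linarith)
  set β := ((N : ℝ) - p) / (p - 1)
  have hf (r : ℝ) (hr : 0 < r) :
      HasDerivAt (fun r => a * muRad N p r + k) (-(a * r ^ (-β - 1))) r :=
    (((hasDerivAt_muRad hp hpN hβ hr).const_mul a).add_const k).congr_deriv (by ring)
  have hy' : 0 < ‖y‖ := norm_pos_iff.2 hy
  have hgrad := gradient_comp_norm_of_power hf hy
  refine ⟨contDiffAt_comp_norm_of_power hf hy, ?_, ?_⟩
  · rw [hgrad]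
    exact smul_ne_zero (neg_ne_zero.2 (mul_pos ha (Real.rpow_pos_of_pos hy' _)).ne') hy
  · rw [hgrad, nondivPLaplacian_smul (contDiffAt_comp_norm_of_power hf hy),
      nondivPLaplacian_comp_norm_of_power hβ hf hy, real_inner_self_eq_norm_sq, sq (‖y‖ ^ 2),
      mul_self_div_self, sub_self, mul_zero, mul_zero, mul_zero]

theorem hasDerivAt_const_mul_rpow_neg_add (γ β k : ℝ) {r : ℝ} (hr : 0 < r) :
    HasDerivAt (fun r => γ * r ^ (-β) + k) (-(γ * β * r ^ (-β - 1))) r :=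
  (((Real.hasDerivAt_rpow_const (Or.inl hr.ne')).const_mul γ).add_const k).congr_deriv (by ring)

theorem gradient_barrier (γ β k ε α : ℝ) (x : 𝔼 N) (hy : y ≠ 0) :
    ∇ (fun y : 𝔼 N => (γ * ‖y‖ ^ (-β) + k) + ε * Real.exp (-(α / 2) * ‖y - x‖ ^ 2)) y =
      -((γ * β * ‖y‖ ^ (-β - 2)) • y) -
        (ε * (α * Real.exp (-(α / 2) * ‖y - x‖ ^ 2))) • (y - x) := by
  have hf (r : ℝ) (hr : 0 < r) := hasDerivAt_const_mul_rpow_neg_add γ β k hr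
  have hφ := (contDiffAt_comp_norm_of_power hf hy).differentiableAt two_ne_zero
  have hE := ((contDiff_gaussian α x).contDiffAt (x := y)).differentiableAt two_ne_zero
  refine gradient_eq_of_forall_dirDeriv fun a => ?_
  rw [dirDeriv_add hφ (hE.const_mul ε), dirDeriv_const_mul hE, ← inner_gradient_eq_dirDeriv,
    ← inner_gradient_eq_dirDeriv, gradient_comp_norm_of_power hf hy, gradient_gaussian, neg_smul,
    neg_smul, inner_sub_left, inner_neg_left, inner_neg_left, real_inner_smul_left,
    real_inner_smul_left, real_inner_smul_left]
  ring

theorem nondivPLaplacian_barrier (hβ : β * (p - 1) = N - p) (γ k ε α : ℝ) (x : 𝔼 N) (hy : y ≠ 0)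
    (g : 𝔼 N) :
    nondivPLaplacian p g
        (fun y : 𝔼 N => (γ * ‖y‖ ^ (-β) + k) + ε * Real.exp (-(α / 2) * ‖y - x‖ ^ 2)) y =
      γ * β * ‖y‖ ^ (-β - 2) * ((p - 2) * (β + 2) * (⟪y, g⟫_ℝ ^ 2 / ‖y‖ ^ 2 - ‖g‖ ^ 2)) +
        ε * (α * Real.exp (-(α / 2) * ‖y - x‖ ^ 2)) *
          (α * (‖g‖ ^ 2 * ‖y - x‖ ^ 2 + (p - 2) * ⟪y - x, g⟫_ℝ ^ 2) -
            (N + p - 2) * ‖g‖ ^ 2) := by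
  have hf (r : ℝ) (hr : 0 < r) := hasDerivAt_const_mul_rpow_neg_add γ β k hr
  have hE : ContDiffAt ℝ 2 (fun y => Real.exp (-(α / 2) * ‖y - x‖ ^ 2)) y :=
    (contDiff_gaussian α x).contDiffAt
  rw [nondivPLaplacian_add (contDiffAt_comp_norm_of_power hf hy) (contDiffAt_const.mul hE),
    nondivPLaplacian_const_mul hE, nondivPLaplacian_comp_norm_of_power hβ hf hy,
    nondivPLaplacian_gaussian]
  ring

/- With `c = γ β ‖y‖ ^ (-β - 2)` and `e` the coefficient of `y - x` in the gradient, the power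
contributes at least `-e ‖∇φ‖ ^ 2` because `∇φ` is nearly parallel to `y` when `e` is small, and the
Gaussian contributes at least `e ‖∇φ‖ ^ 2` because `α` is large. -/
theorem isPSubharmonicAt_barrier (hβ : β * (p - 1) = N - p) (hβ0 : 0 ≤ β) (hγ : 0 ≤ γ)
    (hε : 0 < ε) (hα : 0 < α) (k : ℝ) (hy : y ≠ 0) (hyx : y - x ≠ 0) (hle : ‖y - x‖ ≤ ‖y‖)
    (hαN : N + |p - 2| + 1 ≤ α * (min 1 (p - 1) * ‖y - x‖ ^ 2))
    (h : γ * β = 0 ∨ (|p - 2| * (β + 2) + 2) * (ε * α * ‖y - x‖) ≤ γ * β * ‖y‖ ^ (-β - 1)) :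
    IsPSubharmonicAt p
      (fun y => (γ * ‖y‖ ^ (-β) + k) + ε * Real.exp (-(α / 2) * ‖y - x‖ ^ 2)) y := by
  have hf (r : ℝ) (hr : 0 < r) := hasDerivAt_const_mul_rpow_neg_add γ β k hr
  have hgrad := gradient_barrier γ β k ε α x hy
  have hlap := nondivPLaplacian_barrier hβ γ k ε α x hy
  have hE : Real.exp (-(α / 2) * ‖y - x‖ ^ 2) ≤ 1 := Real.exp_le_one_iff.2 (by
    rw [neg_mul, neg_nonpos]
    positivity)
  have hK : 0 ≤ |p - 2| * (β + 2) := by positivity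
  have hce : γ * β * ‖y‖ ^ (-β - 2) = 0 ∨ (|p - 2| * (β + 2) + 2) *
      (ε * (α * Real.exp (-(α / 2) * ‖y - x‖ ^ 2)) * ‖y - x‖) ≤
        γ * β * ‖y‖ ^ (-β - 2) * ‖y‖ := by
    refine h.imp (fun h => by rw [h, zero_mul]) fun h => ?_
    rw [mul_assoc _ _ ‖y‖, ← Real.rpow_add_one (norm_ne_zero_iff.2 hy), ← mul_assoc ε,
      show -β - 2 + 1 = -β - 1 by ring]
    refine le_trans ?_ h
    gcongr (|p - 2| * (β + 2) + 2) * (?_ * ‖y - x‖)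
    exact mul_le_of_le_one_right (by positivity) hE
  have hc : 0 ≤ γ * β * ‖y‖ ^ (-β - 2) := by positivity
  have he : 0 < ε * (α * Real.exp (-(α / 2) * ‖y - x‖ ^ 2)) := by positivity
  set c := γ * β * ‖y‖ ^ (-β - 2)
  set e := ε * (α * Real.exp (-(α / 2) * ‖y - x‖ ^ 2))
  have hed : 0 ≤ e * ‖y - x‖ := by positivity
  refine ⟨(contDiffAt_comp_norm_of_power hf hy).add
    (contDiffAt_const.mul (contDiff_gaussian α x).contDiffAt), ?_, ?_⟩
  · rw [hgrad]
    exact barrier_gradient_ne_zero hc he hyx (hce.imp_right fun h => by nlinarith)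
  · rw [hlap]
    exact barrier_nonneg hgrad hy hle hc he.le hβ0 (hce.imp_right fun h => by nlinarith) hα.le hαN

/- The two size conditions on `y` hold uniformly on the punctured ball because `‖x‖ = 1`. -/
theorem exists_barrier (hp : 1 < p) (hβ : β * (p - 1) = N - p) (hβ0 : 0 ≤ β) (hγ : 0 ≤ γ)
    (hx : ‖x‖ = 1) {κ c : ℝ} (hκ : 0 < κ) (hc : 0 < c) :
    ∃ α > 0, ∃ ε > 0, ε ≤ c ∧ ∀ k, ∀ y ∈ ball x (1 / 2) \ closedBall x κ, IsPSubharmonicAt p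
      (fun y => (γ * ‖y‖ ^ (-β) + k) + ε * Real.exp (-(α / 2) * ‖y - x‖ ^ 2)) y := by
  have hm : 0 < min 1 (p - 1) := lt_min one_pos (sub_pos.2 hp)
  set α := ((N : ℝ) + |p - 2| + 1) / (min 1 (p - 1) * κ ^ 2) with hαdef
  have hα : 0 < α := div_pos (by positivity) (mul_pos hm (pow_pos hκ 2))
  obtain ⟨ε, hε, hεc, hsmall⟩ : ∃ ε > 0, ε ≤ c ∧ (γ * β = 0 ∨
      (|p - 2| * (β + 2) + 2) * (ε * α) ≤ γ * β * (3 / 2) ^ (-β - 1)) := by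
    rcases (mul_nonneg hγ hβ0).eq_or_lt with h0 | hpos
    · exact ⟨c, hc, le_rfl, Or.inl h0.symm⟩
    · refine ⟨min c (γ * β * (3 / 2) ^ (-β - 1) / ((|p - 2| * (β + 2) + 2) * α)), by positivity,
        min_le_left _ _, Or.inr ?_⟩
      rw [mul_left_comm, ← le_div_iff₀ (by positivity)]
      exact min_le_right _ _
  refine ⟨α, hα, ε, hε, hεc, fun k y hy => ?_⟩
  obtain ⟨hyball, hyκ⟩ : ‖y - x‖ < 1 / 2 ∧ κ < ‖y - x‖ := by
    simpa only [Set.mem_sdiff, mem_ball, mem_closedBall, not_le, dist_eq_norm] using hy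
  have hylow : 1 / 2 < ‖y‖ := by linarith [norm_sub_norm_le x y, norm_sub_rev x y]
  have hyup : ‖y‖ ≤ 3 / 2 := by linarith [norm_sub_norm_le y x]
  have hy0 : 0 < ‖y‖ := by linarith
  refine isPSubharmonicAt_barrier hβ hβ0 hγ hε hα k (norm_pos_iff.1 hy0)
    (norm_pos_iff.1 (hκ.trans hyκ)) (by linarith) ?_ (hsmall.imp_right fun h => ?_)
  · rw [hαdef, div_mul_eq_mul_div, le_div_iff₀ (mul_pos hm (pow_pos hκ 2))]
    gcongr
  · calc (|p - 2| * (β + 2) + 2) * (ε * α * ‖y - x‖)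
        ≤ (|p - 2| * (β + 2) + 2) * (ε * α * 1) := by gcongr; linarith
      _ ≤ γ * β * (3 / 2) ^ (-β - 1) := by rwa [mul_one]
      _ ≤ γ * β * ‖y‖ ^ (-β - 1) := by
        gcongr γ * β * ?_
        exact Real.rpow_le_rpow_of_nonpos hy0 hyup (by linarith)

end Barrier

section Coefficient

variable {N : ℕ} {p β R : ℝ} {v : 𝔼 N → ℝ}

theorem IsPSuperharmonicOn.muRad_le_of_le_on_sphere (hp : 1 < p) (hpN : p ≤ N)
    (hv : IsPSuperharmonicOn p (closedBall 0 R \ {0}) v)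
    (hv0 : ∀ x ∈ closedBall 0 R \ {0}, 0 ≤ v x) {a r : ℝ} (ha : 0 < a) (hr : 0 < r) (hrR : r ≤ R)
    (hle : ∀ x ∈ sphere 0 r, a * (muRad N p r - muRad N p R) ≤ v x) :
    ∀ x ∈ closedBall 0 R \ ball 0 r, a * (muRad N p ‖x‖ - muRad N p R) ≤ v x := by
  have hne {x : 𝔼 N} (hx : x ∉ ball 0 r) : x ≠ 0 := fun h => hx (h ▸ mem_ball_self hr)
  have hφ (x : 𝔼 N) (hx : x ∉ ball 0 r) :
      IsPSubharmonicAt p (fun x : 𝔼 N => a * (muRad N p ‖x‖ - muRad N p R)) x := by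
    simpa only [mul_add, sub_eq_add_neg] using
      isPSubharmonicAt_muRad hp hpN ha (a * -muRad N p R) (hne hx)
  have hsub : closedBall (0 : 𝔼 N) R \ ball 0 r ⊆ closedBall 0 R \ {0} :=
    fun x hx => ⟨hx.1, hne hx.2⟩
  refine (hv.mono hsub).le_on_annulus (fun x hx => (hφ x hx.2).1.continuousAt.continuousWithinAt)
    (fun x hx => hφ x fun h => hx.2 (ball_subset_closedBall h)) fun x hx => ?_
  rcases hx with hx | hx
  · rw [mem_sphere_zero_iff_norm.1 hx]
    exact hle x hx
  · rw [mem_sphere_zero_iff_norm.1 hx, sub_self, mul_zero]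
    exact hv0 x ⟨sphere_subset_closedBall hx, ne_of_mem_sphere hx (hr.trans_le hrR).ne'⟩

theorem IsPSuperharmonicOn.exists_muRad_coefficient (hp : 1 < p) (hpN : p ≤ N) (hR : 0 < R)
    (hv : IsPSuperharmonicOn p (closedBall 0 R \ {0}) v)
    (hv0 : ∀ x ∈ closedBall 0 R \ {0}, 0 ≤ v x) :
    ∃ γ, 0 ≤ γ ∧
      (∀ x ∈ closedBall 0 R \ {0}, γ * (muRad N p ‖x‖ - muRad N p R) ≤ v x) ∧
      ∀ a > γ, ∀ᶠ r in 𝓝[>] 0, ∃ x ∈ sphere 0 r, v x < a * (muRad N p r - muRad N p R) := by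
  have hanti := strictAntiOn_muRad hp hpN
  have : Nonempty (Fin N) := Fin.pos_iff_nonempty.1 (by exact_mod_cast (by linarith : (0 : ℝ) < N))
  set S : Set ℝ := {a | 0 ≤ a ∧
    ∀ x ∈ closedBall 0 R \ {0}, a * (muRad N p ‖x‖ - muRad N p R) ≤ v x}
  have h0S : (0 : ℝ) ∈ S := ⟨le_rfl, fun x hx => by rw [zero_mul]; exact hv0 x hx⟩
  have hbdd : BddAbove S := by
    obtain ⟨x, hx⟩ := exists_norm_eq (𝔼 N) (half_pos hR).le
    have hμ : 0 < muRad N p ‖x‖ - muRad N p R :=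
      sub_pos.2 (hanti (hx ▸ half_pos hR) hR (by linarith))
    have hxR : x ∈ closedBall 0 R \ {0} :=
      ⟨mem_closedBall_zero_iff.2 (by linarith), norm_pos_iff.1 (hx ▸ half_pos hR)⟩
    exact ⟨v x / _, fun a ha => (le_div_iff₀ hμ).2 (ha.2 x hxR)⟩
  have hclosed : IsClosed S := by
    simp only [S, ofPred_and, ofPred_forall]
    exact (isClosed_le continuous_const continuous_id).inter <| isClosed_iInter fun x =>
      isClosed_iInter fun _ => isClosed_le (by fun_prop) continuous_const
  have hγS := hclosed.csSup_mem ⟨0, h0S⟩ hbdd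
  refine ⟨sSup S, hγS.1, hγS.2, fun a ha => ?_⟩
  have ha0 : 0 < a := hγS.1.trans_lt ha
  have haS : a ∉ S := fun h => (le_csSup hbdd h).not_gt ha
  obtain ⟨x, hx, hxa⟩ : ∃ x ∈ closedBall 0 R \ {0}, v x < a * (muRad N p ‖x‖ - muRad N p R) := by
    by_contra! h
    exact haS ⟨ha0.le, h⟩
  filter_upwards [Ioo_mem_nhdsGT (norm_pos_iff.2 hx.2)] with r hr
  by_contra! h
  exact hxa.not_ge (hv.muRad_le_of_le_on_sphere hp hpN hv0 ha0 hr.1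
    (hr.2.le.trans (mem_closedBall_zero_iff.1 hx.1)) h x
    ⟨hx.1, fun hxr => hr.2.not_gt (mem_ball_zero_iff.1 hxr)⟩)

theorem abs_log_le_one {ρ : ℝ} (hρ : ρ ∈ Icc (1 / 2) (3 / 2)) : |Real.log ρ| ≤ 1 := by
  have hρ0 : 0 < ρ := by linarith [hρ.1]
  refine abs_le.2 ⟨?_, by linarith [Real.log_le_sub_one_of_pos hρ0, hρ.2]⟩
  have hinv : ρ⁻¹ ≤ 2 := by
    rw [inv_le_comm₀ hρ0 two_pos]
    linarith [hρ.1]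
  linarith [Real.one_sub_inv_le_log_of_pos hρ0]

theorem IsPSuperharmonicOn.exists_asymptotic_coefficient (hp : 1 < p) (hpN : p ≤ N)
    (hβ : β * (p - 1) = N - p) (hR : 0 < R) (hv : IsPSuperharmonicOn p (closedBall 0 R \ {0}) v)
    (hv0 : ∀ x ∈ closedBall 0 R \ {0}, 0 ≤ v x) :
    ∃ γ, 0 ≤ γ ∧
      (∀ δ > 0, ∀ᶠ r in 𝓝[>] 0, ∀ y ∈ closedBall (0 : 𝔼 N) (3 / 2) \ ball 0 (1 / 2),
        γ * ‖y‖ ^ (-β) - δ ≤ v (r • y) / muRad N p r) ∧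
      ∀ a > γ, ∀ᶠ r in 𝓝[>] 0, ∃ y ∈ sphere (0 : 𝔼 N) 1, v (r • y) / muRad N p r < a := by
  obtain ⟨γ, hγ, hlow, hup⟩ := hv.exists_muRad_coefficient hp hpN hR hv0
  have hμ := tendsto_muRad_nhdsGT_zero hp hpN
  refine ⟨γ, hγ, fun δ hδ => ?_, fun a ha => ?_⟩
  · have hrR : Ioo 0 (R / 2) ∈ 𝓝[>] (0 : ℝ) := Ioo_mem_nhdsGT (half_pos hR)
    filter_upwards [hrR, hμ.eventually_gt_atTop 0,
      hμ.eventually_ge_atTop (γ * (1 + muRad N p R) / δ)] with r hr hμ0 hμδ y hy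
    simp only [Set.mem_sdiff, mem_closedBall_zero_iff, mem_ball_zero_iff, not_lt] at hy
    have hy0 : 0 < ‖y‖ := by linarith
    have hnorm : ‖r • y‖ = r * ‖y‖ := norm_smul_of_nonneg hr.1.le y
    have hry : r • y ∈ closedBall 0 R \ {0} := by
      refine ⟨mem_closedBall_zero_iff.2 ?_, smul_ne_zero hr.1.ne' (norm_pos_iff.1 hy0)⟩
      rw [hnorm]
      nlinarith [hr.1, hr.2]
    rw [div_le_iff₀ hδ] at hμδ
    rw [le_div_iff₀ hμ0]
    have hmul := mul_le_mul_of_nonneg_left (le_muRad_mul hp hpN hβ hr.1 hy0) hγ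
    have hlog := mul_le_mul_of_nonneg_left (abs_log_le_one ⟨hy.2, hy.1⟩) hγ
    have hval := hlow _ hry
    rw [hnorm] at hval
    linarith
  · obtain ⟨b, hγb, hba⟩ := exists_between ha
    filter_upwards [hup b hγb, self_mem_nhdsWithin, hμ.eventually_gt_atTop 0,
      hμ.eventually_ge_atTop (-(b * muRad N p R) / (a - b))] with r ⟨x, hx, hxb⟩ hr hμ0 hμa
    rw [mem_Ioi] at hr
    rw [div_le_iff₀ (sub_pos.2 hba)] at hμa
    refine ⟨r⁻¹ • x, mem_sphere_zero_iff_norm.2 ?_, ?_⟩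
    · rw [norm_smul_of_nonneg (inv_nonneg.2 hr.le), mem_sphere_zero_iff_norm.1 hx,
        inv_mul_cancel₀ hr.ne']
    · rw [smul_inv_smul₀ hr.ne', div_lt_iff₀ hμ0]
      linarith

end Coefficient

section Harnack

theorem le_exp_mul_of_norm_fderiv_le {E : Type*} [NormedAddCommGroup E] [NormedSpace ℝ E]
    {f : E → ℝ} {s : Set E} {K : ℝ} {x y : E} (hs : Convex ℝ s)
    (hf : ∀ z ∈ s, DifferentiableAt ℝ f z) (hpos : ∀ z ∈ s, 0 < f z)
    (hK : ∀ z ∈ s, ‖fderiv ℝ f z‖ ≤ K * f z) (hx : x ∈ s) (hy : y ∈ s) :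
    f x ≤ Real.exp (K * ‖x - y‖) * f y := by
  have hlog : ‖Real.log (f x) - Real.log (f y)‖ ≤ K * ‖x - y‖ :=
    hs.norm_image_sub_le_of_norm_hasFDerivWithin_le
      (fun z hz => ((hf z hz).hasFDerivAt.log (hpos z hz).ne').hasFDerivWithinAt)
      (fun z hz => by
        rw [norm_smul, norm_inv, Real.norm_of_nonneg (hpos z hz).le, inv_mul_le_iff₀ (hpos z hz),
          mul_comm]
        exact hK z hz) hy hx
  rw [← Real.log_le_log_iff (hpos x hx) (mul_pos (Real.exp_pos _) (hpos y hy)),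
    Real.log_mul (Real.exp_ne_zero _) (hpos y hy).ne', Real.log_exp]
  linarith [le_of_abs_le hlog]

theorem half_norm_le_of_mem_closedBall {E : Type*} [SeminormedAddCommGroup E] {x z : E}
    (hz : z ∈ closedBall x (‖x‖ / 2)) : ‖x‖ / 2 ≤ ‖z‖ ∧ ‖z‖ ≤ 3 / 2 * ‖x‖ := by
  rw [mem_closedBall, dist_eq_norm] at hz
  constructor <;> linarith [norm_sub_norm_le x z, norm_sub_norm_le z x, norm_sub_rev x z]

variable {N : ℕ} {p q R : ℝ} {G : Set (𝔼 N)} {u : 𝔼 N → ℝ}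

theorem IsStrongSolution.exists_norm_fderiv_mul_norm_le (hN : 0 < N) (hp : 1 < p)
    (hq : (q - p + 1) * N < 4 * (p - 1)) (hG : IsOpen G) (hu : IsStrongSolution p q G u)
    (hneg : ∀ x ∈ G, u x < 0) (hR : closedBall 0 R \ {0} ⊆ G) :
    ∃ C, 0 ≤ C ∧ ∀ z ∈ closedBall 0 (R / 2) \ {0}, ‖fderiv ℝ u z‖ * ‖z‖ ≤ C * -u z := by
  obtain ⟨C, hC0, hC⟩ := exists_gradient_estimate hN hp hq
  refine ⟨2 * √C, by positivity, fun z ⟨hzR, hz⟩ => ?_⟩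
  rw [mem_closedBall_zero_iff] at hzR
  have hz0 : 0 < ‖z‖ := norm_pos_iff.2 hz
  have hball : closedBall z (‖z‖ / 2) ⊆ G := fun y hy => by
    obtain ⟨hlow, hup⟩ := half_norm_le_of_mem_closedBall hy
    exact hR ⟨mem_closedBall_zero_iff.2 (by linarith), norm_pos_iff.1 (by linarith)⟩
  have huz : 0 < -u z := neg_pos.2 (hneg z (hball (mem_closedBall_self (by positivity))))
  have hsq := hC G u z (‖z‖ / 2) hG hu hneg (by positivity) hball
  rw [norm_gradient_eq_norm_fderiv] at hsq
  refine (pow_le_pow_iff_left₀ (by positivity) (by positivity) two_ne_zero).1 ?_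
  rw [mul_pow, mul_pow, mul_pow, Real.sq_sqrt hC0]
  linarith

/- Along `closedBall x (‖x‖ / 2)` the gradient estimate bounds the logarithmic derivative of `-u` by
a multiple of `1 / ‖x‖`. -/
theorem IsStrongSolution.exists_harnack (hN : 0 < N) (hp : 1 < p)
    (hq : (q - p + 1) * N < 4 * (p - 1)) (hG : IsOpen G) (hu : IsStrongSolution p q G u)
    (hneg : ∀ x ∈ G, u x < 0) (hR : closedBall 0 R \ {0} ⊆ G) :
    ∃ C, 0 ≤ C ∧ ∀ x ∈ closedBall 0 (R / 4) \ {0}, ∀ y ∈ closedBall x (‖x‖ / 2),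
      -u x ≤ Real.exp (C * (‖x - y‖ / ‖x‖)) * -u y := by
  obtain ⟨C, hC0, hC⟩ := hu.exists_norm_fderiv_mul_norm_le hN hp hq hG hneg hR
  refine ⟨2 * C, by positivity, fun x ⟨hxR, hx⟩ y hy => ?_⟩
  rw [mem_closedBall_zero_iff] at hxR
  have hx0 : 0 < ‖x‖ := norm_pos_iff.2 hx
  have hmem {z : 𝔼 N} (hz : z ∈ closedBall x (‖x‖ / 2)) : z ∈ closedBall 0 (R / 2) \ {0} := by
    obtain ⟨hlow, hup⟩ := half_norm_le_of_mem_closedBall hz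
    exact ⟨mem_closedBall_zero_iff.2 (by linarith), norm_pos_iff.1 (by linarith)⟩
  have hmemG {z : 𝔼 N} (hz : z ∈ closedBall x (‖x‖ / 2)) : z ∈ G :=
    hR ⟨closedBall_subset_closedBall (by linarith) (hmem hz).1, (hmem hz).2⟩
  rw [← mul_div_assoc, mul_div_right_comm]
  refine le_exp_mul_of_norm_fderiv_le (f := fun z => -u z) (convex_closedBall x (‖x‖ / 2))
    (fun z hz => ((hu.contDiffAt hG (hmemG hz)).differentiableAt one_ne_zero).fun_neg)
    (fun z hz => neg_pos.2 (hneg z (hmemG hz))) (fun z hz => ?_)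
    (mem_closedBall_self (by positivity)) hy
  rw [fderiv_fun_neg, norm_neg, div_mul_eq_mul_div, le_div_iff₀ hx0]
  calc ‖fderiv ℝ u z‖ * ‖x‖ ≤ ‖fderiv ℝ u z‖ * (2 * ‖z‖) := by
        gcongr
        linarith [(half_norm_le_of_mem_closedBall hz).1]
    _ ≤ 2 * C * -u z := by linarith [hC z (hmem hz)]

end Harnack

section GapPropagation

variable {N : ℕ} {p β γ : ℝ} {G S T U : Set (𝔼 N)} {w : 𝔼 N → ℝ}

/-- A quantitative strong minimum principle: a `p`-superharmonic function on `G` which exceeds `w`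
by a definite amount on `S`, and is nearly above `w` on `G`, exceeds `w` by a definite amount on
`T`, uniformly over all such functions. -/
def GapPropagates (p : ℝ) (G : Set (𝔼 N)) (w : 𝔼 N → ℝ) (S T : Set (𝔼 N)) : Prop :=
  ∀ c > 0, ∃ δ > 0, ∀ v, IsPSuperharmonicOn p G v → (∀ z ∈ G, w z - δ ≤ v z) →
    (∀ z ∈ S, w z + c ≤ v z) → ∀ z ∈ T, w z + δ ≤ v z

namespace GapPropagates

theorem mono {S' T' : Set (𝔼 N)} (h : GapPropagates p G w S T) (hS : S ⊆ S') (hT : T' ⊆ T) :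
    GapPropagates p G w S' T' := fun c hc =>
  let ⟨δ, hδ, hgap⟩ := h c hc
  ⟨δ, hδ, fun v hv hw hc z hz => hgap v hv hw (fun z hz => hc z (hS hz)) z (hT hz)⟩

theorem trans (hST : GapPropagates p G w S T) (hTU : GapPropagates p G w T U) :
    GapPropagates p G w S U := by
  intro c hc
  obtain ⟨δ₁, hδ₁, h₁⟩ := hST c hc
  obtain ⟨δ₂, hδ₂, h₂⟩ := hTU δ₁ hδ₁
  refine ⟨min δ₁ δ₂, lt_min hδ₁ hδ₂, fun v hv hw hS z hz => ?_⟩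
  have hT := h₁ v hv (fun z hz => by linarith [hw z hz, min_le_left δ₁ δ₂]) hS
  have hU := h₂ v hv (fun z hz => by linarith [hw z hz, min_le_right δ₁ δ₂]) hT z hz
  linarith [min_le_right δ₁ δ₂]

theorem union (hST : GapPropagates p G w S T) (hSU : GapPropagates p G w S U) :
    GapPropagates p G w S (T ∪ U) := by
  intro c hc
  obtain ⟨δ₁, hδ₁, h₁⟩ := hST c hc
  obtain ⟨δ₂, hδ₂, h₂⟩ := hSU c hc
  refine ⟨min δ₁ δ₂, lt_min hδ₁ hδ₂, fun v hv hw hS z hz => ?_⟩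
  have hT := h₁ v hv (fun z hz => by linarith [hw z hz, min_le_left δ₁ δ₂]) hS z
  have hU := h₂ v hv (fun z hz => by linarith [hw z hz, min_le_right δ₁ δ₂]) hS z
  exact hz.elim (fun hz => by linarith [hT hz, min_le_left δ₁ δ₂])
    fun hz => by linarith [hU hz, min_le_right δ₁ δ₂]

theorem of_isCompact {K : Set (𝔼 N)} (hK : IsCompact K)
    (h : ∀ y ∈ K, ∃ t ∈ 𝓝 y, GapPropagates p G w S t) : GapPropagates p G w S K :=
  hK.induction_on (fun _ _ => ⟨1, one_pos, fun _ _ _ _ _ hz => hz.elim⟩)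
    (fun _ _ hst ht => ht.mono subset_rfl hst) (fun _ _ hs ht => hs.union ht) fun y hy =>
      let ⟨t, ht, hgap⟩ := h y hy
      ⟨t, mem_nhdsWithin_of_mem_nhds ht, hgap⟩

end GapPropagates

theorem closedBall_half_subset_annulus {x : 𝔼 N} (hx : ‖x‖ = 1) :
    closedBall x (1 / 2) ⊆ closedBall 0 (3 / 2) \ ball 0 (1 / 2) := fun z hz => by
  obtain ⟨hlow, hup⟩ := half_norm_le_of_mem_closedBall (x := x) (by rwa [hx])
  rw [hx] at hlow hup
  exact ⟨mem_closedBall_zero_iff.2 (by linarith), fun h => hlow.not_gt (mem_ball_zero_iff.1 h)⟩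

theorem strictAntiOn_exp_neg_mul_sq {α : ℝ} (hα : 0 < α) :
    StrictAntiOn (fun t => Real.exp (-(α / 2) * t ^ 2)) (Ici 0) := fun a ha b _ hab => by
  rw [Real.exp_lt_exp, neg_mul, neg_mul, neg_lt_neg_iff]
  exact mul_lt_mul_of_pos_left (pow_lt_pow_left₀ hab ha two_ne_zero) (half_pos hα)

theorem continuousOn_norm_rpow_neg {E : Type*} [NormedAddCommGroup E] (β : ℝ) :
    ContinuousOn (fun z : E => ‖z‖ ^ (-β)) {0}ᶜ :=
  continuousOn_id.norm.rpow_const fun _ hz => Or.inl (norm_ne_zero_iff.2 hz)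

/- The comparison function is the barrier of `exists_barrier`, normalized to equal `w - δ` on the
outer sphere; inside, its Gaussian term lifts it above `w`. -/
theorem gapPropagates_closedBall (hp : 1 < p) (hβ : β * (p - 1) = N - p) (hβ0 : 0 ≤ β)
    (hγ : 0 ≤ γ) {x : 𝔼 N} (hx : ‖x‖ = 1) {κ s : ℝ} (hκ : 0 < κ) (hs0 : 0 ≤ s) (hs : s < 1 / 2) :
    GapPropagates p (closedBall 0 (3 / 2) \ ball 0 (1 / 2)) (fun z : 𝔼 N => γ * ‖z‖ ^ (-β))
      (closedBall x κ) (closedBall x s) := by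
  intro c hc
  obtain ⟨α, hα, ε, hε, hεc, hbarrier⟩ := exists_barrier hp hβ hβ0 hγ hx hκ hc
  have hanti := strictAntiOn_exp_neg_mul_sq hα
  set F : ℝ → ℝ := fun t => Real.exp (-(α / 2) * t ^ 2)
  have hF1 {t : ℝ} (ht : 0 ≤ t) : F t ≤ 1 := by
    simpa [F] using hanti.antitoneOn self_mem_Ici ht ht
  have hFhalf : 0 < F (1 / 2) := Real.exp_pos _
  set δ := ε * (F s - F (1 / 2)) / 2 with hδ
  have hδ0 : 0 < δ := half_pos (mul_pos hε (sub_pos.2 (hanti hs0 (by norm_num) hs)))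
  have hsub := closedBall_half_subset_annulus hx
  refine ⟨δ, hδ0, fun v hv hlow hgap => ?_⟩
  set φ : 𝔼 N → ℝ := fun z => (γ * ‖z‖ ^ (-β) + (-(ε * F (1 / 2)) - δ)) + ε * F ‖z - x‖
  have hinner {z : 𝔼 N} (hz : z ∈ closedBall x κ) : φ z ≤ v z := by
    have := mul_le_mul_of_nonneg_left (hF1 (norm_nonneg (z - x))) hε.le
    linarith [hgap z hz, mul_pos hε hFhalf]
  have hφc : ContinuousOn φ (closedBall x (1 / 2) \ ball x κ) :=
    ((((continuousOn_norm_rpow_neg β).mono fun z hz h0 => (hsub hz.1).2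
      (h0 ▸ mem_ball_self one_half_pos)).const_mul γ).add continuousOn_const).add (by fun_prop)
  have hle := (hv.mono (sdiff_subset.trans hsub)).le_on_annulus hφc (hbarrier _) fun z hz => by
    rcases hz with hz | hz
    · exact hinner (sphere_subset_closedBall hz)
    · have := hlow z (hsub (sphere_subset_closedBall hz))
      simp only [φ, mem_sphere_iff_norm.1 hz]
      linarith
  intro z hz
  have hφz : φ z ≤ v z := by
    by_cases hzκ : z ∈ ball x κ
    · exact hinner (ball_subset_closedBall hzκ)
    · exact hle z ⟨closedBall_subset_closedBall hs.le hz, hzκ⟩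
  have := mul_le_mul_of_nonneg_left
    (hanti.antitoneOn (norm_nonneg (z - x)) hs0 (mem_closedBall_iff_norm.1 hz)) hε.le
  linarith

end GapPropagation

section GapPropagationSphere

variable {N : ℕ} {p β γ κ : ℝ}

/- Any two points of the sphere are joined by a chain of points at distance at most `1 / 8`, along
which `gapPropagates_closedBall` is iterated. -/
theorem gapPropagates_sphere (hp : 1 < p) (hN : 1 < N) (hβ : β * (p - 1) = N - p) (hβ0 : 0 ≤ β)
    (hγ : 0 ≤ γ) {x : 𝔼 N} (hx : ‖x‖ = 1) (hκ : 0 < κ) :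
    GapPropagates p (closedBall 0 (3 / 2) \ ball 0 (1 / 2)) (fun z : 𝔼 N => γ * ‖z‖ ^ (-β))
      (closedBall x κ) (sphere 0 1) := by
  set P : 𝔼 N → 𝔼 N → Prop := fun x y => ∀ κ > 0,
    GapPropagates p (closedBall 0 (3 / 2) \ ball 0 (1 / 2)) (fun z => γ * ‖z‖ ^ (-β))
      (closedBall x κ) (closedBall y (1 / 4))
  have hnear {x y : 𝔼 N} (hx : x ∈ sphere 0 1) (hxy : dist x y < 1 / 8) : P x y := fun κ hκ =>
    (gapPropagates_closedBall hp hβ hβ0 hγ (mem_sphere_zero_iff_norm.1 hx) hκ (s := 3 / 8)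
      (by norm_num) (by norm_num)).mono subset_rfl
        (closedBall_subset_closedBall' (by rw [dist_comm]; linarith))
  have hrank : 1 < Module.rank ℝ (𝔼 N) := by
    rw [← Module.finrank_eq_rank, finrank_euclideanSpace_fin]
    exact_mod_cast hN
  have hall {y : 𝔼 N} (hy : y ∈ sphere 0 1) : P x y :=
    (isPreconnected_sphere hrank 0 1).induction₂' P (fun x hx => by
      filter_upwards [self_mem_nhdsWithin, mem_nhdsWithin_of_mem_nhds
        (ball_mem_nhds x (by norm_num : (0 : ℝ) < 1 / 8))] with y hy hyx
      exact ⟨hnear hx (by rwa [dist_comm]), hnear hy hyx⟩)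
      (fun _ _ _ _ _ _ hxy hyz κ hκ => (hxy κ hκ).trans (hyz _ (by norm_num)))
      (mem_sphere_zero_iff_norm.2 hx) hy
  exact .of_isCompact (isCompact_sphere 0 1) fun y hy =>
    ⟨_, closedBall_mem_nhds y (by norm_num), hall hy κ hκ⟩

theorem exists_gap_on_sphere (hp : 1 < p) (hN : 1 < N) (hβ : β * (p - 1) = N - p) (hβ0 : 0 ≤ β)
    (hγ : 0 ≤ γ) (hκ : 0 < κ) {c : ℝ} (hc : 0 < c) :
    ∃ δ > 0, ∀ v, IsPSuperharmonicOn p (closedBall (0 : 𝔼 N) (3 / 2) \ ball 0 (1 / 2)) v →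
      (∀ z ∈ closedBall (0 : 𝔼 N) (3 / 2) \ ball 0 (1 / 2), γ * ‖z‖ ^ (-β) - δ ≤ v z) →
      ∀ θ ∈ sphere 0 1, (∀ z ∈ closedBall θ κ, γ * ‖z‖ ^ (-β) + c ≤ v z) →
        ∀ z ∈ sphere 0 1, γ * ‖z‖ ^ (-β) + δ ≤ v z := by
  obtain ⟨t, ht, hcover⟩ := (isCompact_sphere (0 : 𝔼 N) 1).elim_nhds_subcover
    (fun θ => closedBall θ (κ / 2)) fun θ _ => closedBall_mem_nhds θ (half_pos hκ)
  have hgap (θ : t) := gapPropagates_sphere hp hN hβ hβ0 hγ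
    (mem_sphere_zero_iff_norm.1 (ht θ θ.2)) (half_pos hκ) c hc
  choose δ hδ hgap using hgap
  obtain ⟨δ₀, hδ₀, hle⟩ : ∃ δ₀ > 0, ∀ θ, δ₀ ≤ δ θ := by
    simpa using isCompact_univ.exists_forall_le' continuous_of_discreteTopology.continuousOn
      fun θ _ => hδ θ
  refine ⟨δ₀, hδ₀, fun v hv hlow θ hθ hc z hz => ?_⟩
  obtain ⟨θ₀, hθ₀, hθθ₀⟩ := mem_iUnion₂.1 (hcover hθ)
  have := hgap ⟨θ₀, hθ₀⟩ v hv (fun z hz => by linarith [hlow z hz, hle ⟨θ₀, hθ₀⟩])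
    (fun z hz => hc z (closedBall_subset_closedBall' (by
      rw [dist_comm]; linarith [mem_closedBall.1 hθθ₀]) hz)) z hz
  linarith [hle ⟨θ₀, hθ₀⟩]

end GapPropagationSphere

section IsolatedSingularity

theorem exists_rpow_add_le_exp_neg_mul (β C : ℝ) {a γ : ℝ} (h : γ < a) :
    ∃ κ ∈ Ioo (0 : ℝ) (1 / 2), γ * (1 - κ) ^ (-β) + (a - γ) / 2 ≤ Real.exp (-(C * κ)) * a := by
  have hcont : Tendsto (fun κ : ℝ => Real.exp (-(C * κ)) * a - (γ * (1 - κ) ^ (-β) + (a - γ) / 2))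
      (𝓝[>] 0) (𝓝 (Real.exp (-(C * 0)) * a - (γ * (1 - 0) ^ (-β) + (a - γ) / 2))) := by
    have hpow : ContinuousAt (fun κ : ℝ => (1 - κ) ^ (-β)) 0 :=
      (continuousAt_const.sub continuousAt_id).rpow_const (by norm_num)
    exact ((ContinuousAt.mul (by fun_prop) continuousAt_const).sub
      ((continuousAt_const.mul hpow).add continuousAt_const)).tendsto.mono_left
        nhdsWithin_le_nhds
  have hpos : 0 < Real.exp (-(C * 0)) * a - (γ * (1 - 0) ^ (-β) + (a - γ) / 2) := by
    rw [mul_zero, neg_zero, Real.exp_zero, sub_zero, Real.one_rpow]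
    linarith
  obtain ⟨κ, hκ, hκ'⟩ := ((hcont.eventually_const_lt hpos).and
    (Ioo_mem_nhdsGT (by norm_num : (0 : ℝ) < 1 / 2))).exists
  exact ⟨κ, hκ', (sub_pos.1 hκ).le⟩

variable {N : ℕ} {p β C R a γ κ c m : ℝ} {v : 𝔼 N → ℝ} {x : 𝔼 N}

theorem gap_of_harnack (hβ0 : 0 ≤ β) (hγ : 0 ≤ γ) (hC : 0 ≤ C) (hκ : κ ∈ Ioo 0 (1 / 2))
    (hκc : γ * (1 - κ) ^ (-β) + c ≤ Real.exp (-(C * κ)) * a) (hx : x ≠ 0) (hm : 0 < m)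
    (hv : ∀ y ∈ closedBall x (‖x‖ / 2), v x ≤ Real.exp (C * (‖x - y‖ / ‖x‖)) * v y)
    (ha0 : 0 ≤ a) (ha : a ≤ v x / m) :
    ∀ z ∈ closedBall (‖x‖⁻¹ • x) κ, γ * ‖z‖ ^ (-β) + c ≤ v (‖x‖ • z) / m := by
  intro z hz
  have hx0 : 0 < ‖x‖ := norm_pos_iff.2 hx
  rw [mem_closedBall', dist_eq_norm] at hz
  have hdist : ‖x - ‖x‖ • z‖ / ‖x‖ = ‖‖x‖⁻¹ • x - z‖ := by
    rw [div_eq_inv_mul, ← norm_smul_of_nonneg (inv_nonneg.2 hx0.le), smul_sub,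
      inv_smul_smul₀ hx0.ne']
  have hmem : ‖x‖ • z ∈ closedBall x (‖x‖ / 2) := by
    rw [mem_closedBall', dist_eq_norm, div_eq_mul_inv, ← div_le_iff₀' hx0, hdist]
    linarith [hκ.2]
  have hnorm : 1 - κ ≤ ‖z‖ := by
    have := norm_sub_norm_le (‖x‖⁻¹ • x) z
    rw [norm_smul_of_nonneg (inv_nonneg.2 hx0.le), inv_mul_cancel₀ hx0.ne'] at this
    linarith
  calc γ * ‖z‖ ^ (-β) + c ≤ γ * (1 - κ) ^ (-β) + c := by
        gcongr γ * ?_ + c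
        exact Real.rpow_le_rpow_of_nonpos (by linarith [hκ.2]) hnorm (neg_nonpos.2 hβ0)
    _ ≤ Real.exp (-(C * κ)) * a := hκc
    _ ≤ Real.exp (-(C * κ)) * (v x / m) := by gcongr
    _ ≤ Real.exp (-(C * κ)) * (Real.exp (C * κ) * v (‖x‖ • z) / m) := by
        gcongr
        refine (hv _ hmem).trans ?_
        have hvz : 0 ≤ v (‖x‖ • z) := by
          have hvx : 0 ≤ v x := (mul_nonneg ha0 hm.le).trans ((le_div_iff₀ hm).1 ha)
          exact nonneg_of_mul_nonneg_right (hvx.trans (hv _ hmem)) (Real.exp_pos _)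
        rw [hdist]
        gcongr
    _ = v (‖x‖ • z) / m := by
        rw [← mul_div_assoc, ← mul_assoc, ← Real.exp_add, neg_add_cancel, Real.exp_zero, one_mul]

theorem annulus_subset_preimage_smul {r : ℝ} (hr : 0 < r) (hrR : 2 * r ≤ R) :
    closedBall (0 : 𝔼 N) (3 / 2) \ ball 0 (1 / 2) ⊆ (r • ·) ⁻¹' (closedBall 0 R \ {0}) := by
  intro y hy
  simp only [Set.mem_sdiff, mem_closedBall_zero_iff, mem_ball_zero_iff, not_lt] at hy
  refine ⟨mem_closedBall_zero_iff.2 ?_, smul_ne_zero hr.ne' (norm_pos_iff.1 (by linarith))⟩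
  rw [norm_smul_of_nonneg hr.le]
  nlinarith

theorem IsPSuperharmonicOn.exists_tendsto_div_muRad (hp : 1 < p) (hpN : p ≤ N) (hR : 0 < R)
    (hv : IsPSuperharmonicOn p (closedBall 0 R \ {0}) v)
    (hv0 : ∀ x ∈ closedBall 0 R \ {0}, 0 ≤ v x) (hC : 0 ≤ C)
    (hharnack : ∀ x ∈ closedBall 0 (R / 4) \ {0}, ∀ y ∈ closedBall x (‖x‖ / 2),
      v x ≤ Real.exp (C * (‖x - y‖ / ‖x‖)) * v y) :
    ∃ γ, 0 ≤ γ ∧ Tendsto (fun x => v x / muRad N p ‖x‖) (𝓝[≠] 0) (𝓝 γ) := by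
  have hp1 : 0 < p - 1 := sub_pos.2 hp
  obtain ⟨β, hβ0, hβ⟩ : ∃ β, 0 ≤ β ∧ β * (p - 1) = N - p :=
    ⟨(N - p) / (p - 1), div_nonneg (sub_nonneg.2 hpN) hp1.le, div_mul_cancel₀ _ hp1.ne'⟩
  obtain ⟨γ, hγ, hlow, hup⟩ := hv.exists_asymptotic_coefficient hp hpN hβ hR hv0
  have hunit {x : 𝔼 N} (hx : x ≠ 0) : ‖‖x‖⁻¹ • x‖ = 1 := norm_smul_inv_norm hx
  have hpow {y : 𝔼 N} (hy : ‖y‖ = 1) : γ * ‖y‖ ^ (-β) = γ := by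
    rw [hy, Real.one_rpow, mul_one]
  have hsphere {y : 𝔼 N} (hy : ‖y‖ = 1) : y ∈ closedBall 0 (3 / 2) \ ball 0 (1 / 2) :=
    closedBall_half_subset_annulus hy (mem_closedBall_self (by norm_num))
  refine ⟨γ, hγ, tendsto_order.2 ⟨fun a ha => ?_, fun a ha => ?_⟩⟩
  · filter_upwards [tendsto_norm_nhdsNE_zero.eventually (hlow ((γ - a) / 2) (by linarith)),
      self_mem_nhdsWithin] with x hx hx0
    have := hx _ (hsphere (hunit hx0))
    rw [hpow (hunit hx0), smul_inv_smul₀ (norm_ne_zero_iff.2 hx0)] at this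
    linarith
  · obtain ⟨κ, hκ, hκc⟩ := exists_rpow_add_le_exp_neg_mul β C ha
    obtain ⟨δ, hδ, hgap⟩ := exists_gap_on_sphere (N := N) hp (by exact_mod_cast hp.trans_le hpN) hβ
      hβ0 hγ hκ.1 (half_pos (sub_pos.2 ha))
    filter_upwards [tendsto_norm_nhdsNE_zero.eventually (hlow δ hδ),
      tendsto_norm_nhdsNE_zero.eventually (hup (γ + δ) (by linarith)),
      tendsto_norm_nhdsNE_zero.eventually (Ioo_mem_nhdsGT (show 0 < R / 4 by linarith)),
      tendsto_norm_nhdsNE_zero.eventually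
        ((tendsto_muRad_nhdsGT_zero hp hpN).eventually_gt_atTop 0)]
      with x hlowx ⟨y, hy, hyγ⟩ ⟨hx0, hxR⟩ hμ
    by_contra! hax
    have hx : x ≠ 0 := norm_pos_iff.1 hx0
    have hgapx := gap_of_harnack hβ0 hγ hC hκ hκc hx hμ
      (hharnack x ⟨mem_closedBall_zero_iff.2 hxR.le, hx⟩) (hγ.trans ha.le) hax
    have hsup := (hv.rescale hμ hx0.ne').mono (annulus_subset_preimage_smul hx0 (by linarith))
    have hgapy := hgap _ hsup hlowx _ (mem_sphere_zero_iff_norm.2 (hunit hx)) hgapx y hy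
    rw [hpow (mem_sphere_zero_iff_norm.1 hy)] at hgapy
    linarith

theorem criticalExponent_le (hN : 2 ≤ N) (hp : 1 ≤ p) :
    N * (p - 1) / (N - 1) ≤ (N + 4) * (p - 1) / N := by
  have hN' : (2 : ℝ) ≤ N := by exact_mod_cast hN
  rw [div_le_div_iff₀ (by linarith) (by linarith)]
  nlinarith

theorem negative_singularity_general (N : ℕ) (p q : ℝ) (hp1 : 1 < p) (hpN : p ≤ N)
    (hq : q < (N + 4) * (p - 1) / N) (Ω : Set (𝔼 N)) (hΩ : IsOpen Ω) (h0 : (0 : 𝔼 N) ∈ Ω)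
    (u : 𝔼 N → ℝ) (hu : IsStrongSolution p q (Ω \ {0}) u) (hneg : ∀ x ∈ Ω \ {0}, u x < 0) :
    ∃ k : ℝ, k ≤ 0 ∧ Tendsto (fun x => u x / mup N p x) (𝓝[≠] 0) (𝓝 k) := by
  have hN : (0 : ℝ) < N := by linarith
  have hq' : (q - p + 1) * N < 4 * (p - 1) := by linarith [(lt_div_iff₀ hN).1 hq]
  have hG : IsOpen (Ω \ {0}) := hΩ.sdiff isClosed_singleton
  obtain ⟨R, hR, hRΩ⟩ := nhds_basis_closedBall.mem_iff.1 (hΩ.mem_nhds h0)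
  have hRG : closedBall 0 R \ {0} ⊆ Ω \ {0} := sdiff_subset_sdiff_left hRΩ
  obtain ⟨C, hC, hharnack⟩ := hu.exists_harnack (by exact_mod_cast hN) hp1 hq' hG hneg hRG
  have hsuper := (hu.isPSuperharmonicOn_neg hp1.le hG).mono hRG
  obtain ⟨γ, hγ, hlim⟩ := hsuper.exists_tendsto_div_muRad hp1 hpN hR
    (fun x hx => (neg_pos.2 (hneg x (hRG hx))).le) hC hharnack
  exact ⟨-γ, neg_nonpos.2 hγ, by simpa only [neg_div, neg_neg, mup_eq_muRad] using hlim.neg⟩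

end IsolatedSingularity

/-- Isolated singularities of negative solutions: `u/μ_p` has a limit `k ≤ 0`. -/
theorem negative_singularity (N : ℕ) (hN : 2 ≤ N) (p q : ℝ) (hp1 : 1 < p) (hpN : p ≤ N)
    (hq1 : p - 1 < q) (hq2 : q < (N : ℝ) * (p - 1) / ((N : ℝ) - 1))
    (Ω : Set (EuclideanSpace ℝ (Fin N))) (hΩ : IsOpen Ω)
    (h0 : (0 : EuclideanSpace ℝ (Fin N)) ∈ Ω)
    (u : EuclideanSpace ℝ (Fin N) → ℝ) (hu : IsStrongSolution p q (Ω \ {0}) u)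
    (hneg : ∀ x ∈ Ω \ {0}, u x < 0) :
    ∃ k : ℝ, k ≤ 0 ∧
      Filter.Tendsto (fun x => u x / mup N p x) (𝓝[≠] (0 : EuclideanSpace ℝ (Fin N)))
        (nhds k) :=
  negative_singularity_general N p q hp1 hpN (hq2.trans_le (criticalExponent_le hN hp1.le)) Ω hΩ h0
    u hu hneg
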